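/- arXiv:1303.4268 — 3 statements merged into one kernel-verified Lean document; each statement's English description precedes it below -/
import Mathlib

section
/- Fix σ > 0 and k ∈ ℝ with k ≠ 0. Then, as τ → 0+, the Black–Scholes forward-start call price satisfies C_BS(τ,k,σ) = (1−e^k)·1_{{k<0}} + (e^{k/2 − k²/(2σ²τ)}·(σ²τ)^{3/2}/(k²·√(2π)))·[1 − (3/k² + 1/8)·σ²τ + o(τ)]; that is, the ratio (C_BS(τ,k,σ) − (1−e^k)·1_{{k<0}}) / (e^{k/2 − k²/(2σ²τ)}·(σ²τ)^{3/2}/(k²·√(2π))) equals 1 − (3/k² + 1/8)·σ²τ + o(τ) as τ → 0+. -/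
open Filter Topology Asymptotics MeasureTheory

set_option linter.unusedVariables false

noncomputable section

/-- the standard normal cumulative distribution function. -/
def stdNormalCDF (x : ℝ) : ℝ :=
  (Real.sqrt (2 * Real.pi))⁻¹ * ∫ y in Set.Iic x, Real.exp (-(y ^ 2) / 2)

/-- Black–Scholes call price with log-strike `k`, maturity `τ` and volatility `σ`. -/
def CBS (τ k σ : ℝ) : ℝ :=
  stdNormalCDF (-k / (σ * Real.sqrt τ) + σ * Real.sqrt τ / 2) -
    Real.exp k * stdNormalCDF (-k / (σ * Real.sqrt τ) - σ * Real.sqrt τ / 2)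

lemma sn_integrable : Integrable (fun y : ℝ => Real.exp (-(y ^ 2) / 2)) := by
  have h := integrable_exp_neg_mul_sq (b := 1 / 2) (by norm_num)
  refine h.congr (Filter.Eventually.of_forall fun y => ?_)
  simp only
  congr 1
  ring

lemma sn_hasDerivAt (x : ℝ) : HasDerivAt stdNormalCDF
    ((Real.sqrt (2 * Real.pi))⁻¹ * Real.exp (-(x ^ 2) / 2)) x := by
  have hc : Continuous (fun y : ℝ => Real.exp (-(y ^ 2) / 2)) := by fun_prop
  have h1 : HasDerivAt (fun u => ∫ y in (0 : ℝ)..u, Real.exp (-(y ^ 2) / 2))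
      (Real.exp (-(x ^ 2) / 2)) x :=
    intervalIntegral.integral_hasDerivAt_right (hc.intervalIntegrable _ _)
      (hc.stronglyMeasurableAtFilter _ _) hc.continuousAt
  have h2 := (h1.const_add (∫ y in Set.Iic (0 : ℝ), Real.exp (-(y ^ 2) / 2))).const_mul
    (Real.sqrt (2 * Real.pi))⁻¹
  refine h2.congr_of_eventuallyEq (Filter.Eventually.of_forall fun u => ?_)
  simp only [stdNormalCDF]
  rw [← intervalIntegral.integral_Iic_sub_Iic sn_integrable.integrableOn
    sn_integrable.integrableOn]
  ring

lemma sn_total : (Real.sqrt (2 * Real.pi))⁻¹ * ∫ y : ℝ, Real.exp (-(y ^ 2) / 2) = 1 := by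
  have h := integral_gaussian (1 / 2)
  have h2 : (∫ y : ℝ, Real.exp (-(y ^ 2) / 2)) = Real.sqrt (2 * Real.pi) := by
    rw [show 2 * Real.pi = Real.pi / (1 / 2) by ring, ← h]
    congr 1
    ext y
    congr 1
    ring
  rw [h2]
  exact inv_mul_cancel₀ (by positivity)

lemma sn_atTop : Tendsto stdNormalCDF atTop (𝓝 1) := by
  rw [← sn_total]
  exact ((aecover_Iic tendsto_id).integral_tendsto_of_countably_generated
    sn_integrable).const_mul _

lemma sn_atBot : Tendsto stdNormalCDF atBot (𝓝 0) := by
  have h := ((aecover_Ioi (μ := volume) (tendsto_id (α := ℝ))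
    (l := atBot)).integral_tendsto_of_countably_generated
    sn_integrable).const_mul (Real.sqrt (2 * Real.pi))⁻¹
  rw [sn_total] at h
  have h2 := h.const_sub 1
  rw [sub_self] at h2
  refine h2.congr fun x => ?_
  simp only [stdNormalCDF, id]
  rw [← sn_total, ← intervalIntegral.integral_Iic_add_Ioi (b := x) sn_integrable.integrableOn
    sn_integrable.integrableOn]
  ring

/-- price minus intrinsic value in terms of total volatility -/
def snF (k s : ℝ) : ℝ :=
  stdNormalCDF (-k / s + s / 2) - Real.exp k * stdNormalCDF (-k / s - s / 2) -
    (1 - Real.exp k) * (if k < 0 then 1 else 0)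

lemma snF_tendsto (k : ℝ) (hk : k ≠ 0) : Tendsto (snF k) (𝓝[>] 0) (𝓝 0) := by
  have hs : Tendsto (fun s : ℝ => s / 2) (𝓝[>] 0) (𝓝 0) := by
    have : Tendsto (fun s : ℝ => s / 2) (𝓝 0) (𝓝 (0 / 2)) :=
      Continuous.tendsto (by fun_prop) 0
    rw [zero_div] at this
    exact this.mono_left nhdsWithin_le_nhds
  have hi : Tendsto (fun s : ℝ => s⁻¹) (𝓝[>] 0) atTop := tendsto_inv_nhdsGT_zero
  rcases lt_or_gt_of_ne hk with h | h
  · have h0 : Tendsto (fun s : ℝ => -k / s) (𝓝[>] 0) atTop :=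
      hi.const_mul_atTop (neg_pos.mpr h)
    have h1 := sn_atTop.comp (h0.atTop_add hs)
    have h2 := sn_atTop.comp (h0.atTop_add hs.neg)
    have h3 := (h1.sub (h2.const_mul (Real.exp k))).sub_const
      ((1 - Real.exp k) * (if k < 0 then 1 else 0))
    rw [if_pos h] at h3
    convert h3 using 1
    · ext s; simp [snF, h, sub_eq_add_neg]
    · congr 1; ring
  · have h0 : Tendsto (fun s : ℝ => -k / s) (𝓝[>] 0) atBot :=
      hi.const_mul_atTop_of_neg (neg_neg_iff_pos.mpr h)
    have h1 := sn_atBot.comp (h0.atBot_add hs)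
    have h2 := sn_atBot.comp (h0.atBot_add hs.neg)
    have h3 := (h1.sub (h2.const_mul (Real.exp k))).sub_const
      ((1 - Real.exp k) * (if k < 0 then 1 else 0))
    rw [if_neg h.not_gt] at h3
    convert h3 using 1
    · ext s; simp [snF, h.not_gt, sub_eq_add_neg]
    · congr 1; ring

lemma snF_deriv (k s : ℝ) (hs : 0 < s) : HasDerivAt (snF k)
    ((Real.sqrt (2 * Real.pi))⁻¹ * Real.exp (k / 2) * Real.exp (-k ^ 2 / (2 * s ^ 2)) *
      Real.exp (-s ^ 2 / 8)) s := by
  have hs' := hs.ne'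
  have h0 : HasDerivAt (fun s : ℝ => -k / s) (k / s ^ 2) s := by
    have := (hasDerivAt_inv hs').const_mul (-k)
    refine HasDerivAt.congr_deriv this ?_
    field_simp
  have h1 : HasDerivAt (fun s : ℝ => s / 2) (1 / 2) s := (hasDerivAt_id s).div_const 2
  have h2 := (sn_hasDerivAt (-k / s + s / 2)).comp s (h0.add h1)
  have h3 := (sn_hasDerivAt (-k / s - s / 2)).comp s (h0.sub h1)
  have h4 := (h2.sub (h3.const_mul (Real.exp k))).sub_const
    ((1 - Real.exp k) * (if k < 0 then 1 else 0))
  refine HasDerivAt.congr_deriv h4 ?_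
  have e1 : Real.exp (-((-k / s + s / 2) ^ 2) / 2) =
      Real.exp (k / 2) * Real.exp (-k ^ 2 / (2 * s ^ 2)) * Real.exp (-s ^ 2 / 8) := by
    rw [← Real.exp_add, ← Real.exp_add]
    congr 1
    field_simp
    ring
  have e2 : Real.exp k * Real.exp (-((-k / s - s / 2) ^ 2) / 2) =
      Real.exp (k / 2) * Real.exp (-k ^ 2 / (2 * s ^ 2)) * Real.exp (-s ^ 2 / 8) := by
    rw [← Real.exp_add, ← Real.exp_add, ← Real.exp_add]
    congr 1
    field_simp
    ring
  rw [e1]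
  linear_combination -(Real.sqrt (2 * Real.pi))⁻¹ * (k / s ^ 2 - 1 / 2) * e2

lemma sn_exp_deriv (k s : ℝ) (hs : 0 < s) :
    HasDerivAt (fun s : ℝ => Real.exp (-k ^ 2 / (2 * s ^ 2)))
      (Real.exp (-k ^ 2 / (2 * s ^ 2)) * (k ^ 2 / s ^ 3)) s := by
  have hs' := hs.ne'
  apply HasDerivAt.exp
  have h := (hasDerivAt_const s (-k ^ 2)).div ((hasDerivAt_pow 2 s).const_mul 2)
    (by positivity)
  refine HasDerivAt.congr_deriv h ?_
  field_simp
  ring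

lemma sn_exp_pow_tendsto (k : ℝ) (p : ℝ → ℝ) (hp : Continuous p) (hp0 : p 0 = 0) :
    Tendsto (fun s : ℝ => Real.exp (-k ^ 2 / (2 * s ^ 2)) * p s) (𝓝[>] 0) (𝓝 0) := by
  have h : Tendsto p (𝓝[>] 0) (𝓝 0) := by
    have := hp.tendsto 0
    rw [hp0] at this
    exact this.mono_left nhdsWithin_le_nhds
  refine squeeze_zero_norm (fun s => ?_) (tendsto_zero_iff_norm_tendsto_zero.mp h)
  rw [norm_mul, Real.norm_eq_abs, Real.abs_exp]
  have : Real.exp (-k ^ 2 / (2 * s ^ 2)) ≤ 1 := by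
    rw [Real.exp_le_one_iff]
    apply div_nonpos_of_nonpos_of_nonneg
    · nlinarith [sq_nonneg k]
    · positivity
  exact mul_le_of_le_one_left (norm_nonneg _) this

lemma sn_main (k : ℝ) (hk : k ≠ 0) :
    Tendsto (fun s : ℝ => (snF k s - (Real.sqrt (2 * Real.pi))⁻¹ * Real.exp (k / 2) / k ^ 2 *
        (Real.exp (-k ^ 2 / (2 * s ^ 2)) * (s ^ 3 - (3 / k ^ 2 + 1 / 8) * s ^ 5))) /
        (Real.exp (-k ^ 2 / (2 * s ^ 2)) * s ^ 5)) (𝓝[>] 0) (𝓝 0) := by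
  set c := (Real.sqrt (2 * Real.pi))⁻¹ * Real.exp (k / 2) with hc
  set C := 3 / k ^ 2 + 1 / 8 with hC
  apply HasDerivAt.lhopital_zero_nhdsGT
    (f' := fun s => c * (Real.exp (-k ^ 2 / (2 * s ^ 2)) *
      (Real.exp (-s ^ 2 / 8) - 1 + s ^ 2 / 8 + 5 * C * s ^ 4 / k ^ 2)))
    (g' := fun s => Real.exp (-k ^ 2 / (2 * s ^ 2)) * (k ^ 2 * s ^ 2 + 5 * s ^ 4))
  · filter_upwards [self_mem_nhdsWithin] with s (hs : 0 < s)
    have h1 := (hasDerivAt_pow 3 s).sub ((hasDerivAt_pow 5 s).const_mul C)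
    have h2 := (snF_deriv k s hs).sub (((sn_exp_deriv k s hs).mul h1).const_mul (c / k ^ 2))
    refine HasDerivAt.congr_deriv h2 ?_
    have hs' := hs.ne'
    simp only [← hc, Pi.sub_apply]
    generalize Real.exp (-s ^ 2 / 8) = E
    generalize Real.exp (-k ^ 2 / (2 * s ^ 2)) = G
    rw [hC]
    push_cast
    field_simp
    ring
  · filter_upwards [self_mem_nhdsWithin] with s (hs : 0 < s)
    have h2 := (sn_exp_deriv k s hs).mul (hasDerivAt_pow 5 s)
    refine HasDerivAt.congr_deriv h2 ?_
    have hs' := hs.ne'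
    push_cast
    field_simp
    try ring
  · filter_upwards [self_mem_nhdsWithin] with s (hs : 0 < s)
    positivity
  · have := (snF_tendsto k hk).sub ((sn_exp_pow_tendsto k
      (fun s => s ^ 3 - C * s ^ 5) (by fun_prop) (by simp)).const_mul (c / k ^ 2))
    simpa using this
  · exact sn_exp_pow_tendsto k (fun s => s ^ 5) (by fun_prop) (by simp)
  · -- ratio of derivatives
    have hd : HasDerivAt (fun x : ℝ => Real.exp (-x / 8)) (-1 / 8) 0 := by
      have := ((hasDerivAt_id (0 : ℝ)).neg.div_const 8).exp
      simpa using this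
    have hsl := hd.tendsto_slope_zero_right
    have hsq : Tendsto (fun s : ℝ => s ^ 2) (𝓝[>] 0) (𝓝[>] 0) := by
      refine tendsto_nhdsWithin_iff.mpr ⟨?_, ?_⟩
      · have : Tendsto (fun s : ℝ => s ^ 2) (𝓝 0) (𝓝 (0 ^ 2)) :=
          Continuous.tendsto (by fun_prop) 0
        simp only [ne_eq, OfNat.ofNat_ne_zero, not_false_eq_true, zero_pow] at this
        exact this.mono_left nhdsWithin_le_nhds
      · filter_upwards [self_mem_nhdsWithin] with s (hs : 0 < s)
        exact pow_pos hs 2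
    have hA := hsl.comp hsq
    have hB : Tendsto (fun s : ℝ => s ^ 2) (𝓝[>] 0) (𝓝 0) := hsq.mono_right nhdsWithin_le_nhds
    have hN := ((hA.add_const (1 / 8)).add (hB.const_mul (5 * C / k ^ 2))).const_mul c
    have hD := (hB.const_mul 5).const_add (k ^ 2)
    have hQ := hN.div hD (by simpa using hk)
    have hz : c * (-1 / 8 + 1 / 8 + 5 * C / k ^ 2 * 0) / (k ^ 2 + 5 * 0) = 0 := by
      norm_num
    rw [hz] at hQ
    refine hQ.congr' ?_
    filter_upwards [self_mem_nhdsWithin] with s (hs : 0 < s)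
    have hs' := hs.ne'
    have hp : k ^ 2 + 5 * s ^ 2 ≠ 0 := by positivity
    have hp2 : k ^ 2 * s ^ 2 + 5 * s ^ 4 ≠ 0 := by positivity
    have hG := (Real.exp_pos (-k ^ 2 / (2 * s ^ 2))).ne'
    simp only [Pi.div_apply, Function.comp, smul_eq_mul, zero_add, neg_zero, zero_div,
      Real.exp_zero]
    generalize Real.exp (-s ^ 2 / 8) = E at *
    generalize Real.exp (-k ^ 2 / (2 * s ^ 2)) = G at *
    rw [div_eq_div_iff hp (mul_ne_zero hG hp2)]
    field_simp
    try ring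

theorem stmt3 (σ k : ℝ) (hσ : 0 < σ) (hk : k ≠ 0) :
    ∃ err : ℝ → ℝ, err =o[𝓝[>] (0 : ℝ)] (fun τ : ℝ => τ) ∧
      ∀ᶠ τ in 𝓝[>] (0 : ℝ),
        (CBS τ k σ - (1 - Real.exp k) * (if k < 0 then 1 else 0)) /
            (Real.exp (k / 2 - k ^ 2 / (2 * σ ^ 2 * τ)) * (σ ^ 2 * τ) ^ ((3 : ℝ) / 2) /
              (k ^ 2 * Real.sqrt (2 * Real.pi))) =
          1 - (3 / k ^ 2 + 1 / 8) * σ ^ 2 * τ + err τ := by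
  refine ⟨fun τ => (CBS τ k σ - (1 - Real.exp k) * (if k < 0 then 1 else 0)) /
            (Real.exp (k / 2 - k ^ 2 / (2 * σ ^ 2 * τ)) * (σ ^ 2 * τ) ^ ((3 : ℝ) / 2) /
              (k ^ 2 * Real.sqrt (2 * Real.pi))) -
          (1 - (3 / k ^ 2 + 1 / 8) * σ ^ 2 * τ), ?_, Filter.Eventually.of_forall fun τ => by ring⟩
  have hs : Tendsto (fun τ : ℝ => σ * Real.sqrt τ) (𝓝[>] 0) (𝓝[>] 0) := by
    refine tendsto_nhdsWithin_iff.mpr ⟨?_, ?_⟩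
    · have : Tendsto (fun τ : ℝ => σ * Real.sqrt τ) (𝓝 0) (𝓝 (σ * Real.sqrt 0)) :=
        Continuous.tendsto (by fun_prop) 0
      rw [Real.sqrt_zero, mul_zero] at this
      exact this.mono_left nhdsWithin_le_nhds
    · filter_upwards [self_mem_nhdsWithin] with τ (hτ : 0 < τ)
      exact mul_pos hσ (Real.sqrt_pos.mpr hτ)
  have hm := ((sn_main k hk).comp hs).const_mul
    (σ ^ 2 * (k ^ 2 * Real.sqrt (2 * Real.pi) / Real.exp (k / 2)))
  rw [mul_zero] at hm
  rw [isLittleO_iff_tendsto']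
  swap
  · filter_upwards [self_mem_nhdsWithin] with τ (hτ : 0 < τ) h0
    exact absurd h0 hτ.ne'
  refine hm.congr' ?_
  filter_upwards [self_mem_nhdsWithin] with τ (hτ : 0 < τ)
  have hF : CBS τ k σ - (1 - Real.exp k) * (if k < 0 then 1 else 0) =
      snF k (σ * Real.sqrt τ) := rfl
  rw [hF]
  simp only [Function.comp]
  have hspos : 0 < σ * Real.sqrt τ := mul_pos hσ (Real.sqrt_pos.mpr hτ)
  have hsq : σ ^ 2 * τ = (σ * Real.sqrt τ) ^ 2 := by
    rw [mul_pow, Real.sq_sqrt hτ.le]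
  have hτs : τ = (σ * Real.sqrt τ) ^ 2 / σ ^ 2 := by
    rw [← hsq]; field_simp
  have hpow : ((σ * Real.sqrt τ) ^ 2) ^ ((3 : ℝ) / 2) = (σ * Real.sqrt τ) ^ 3 := by
    rw [← Real.rpow_natCast, ← Real.rpow_mul hspos.le, ← Real.rpow_natCast]
    norm_num
  have he : Real.exp (k / 2 - k ^ 2 / (2 * σ ^ 2 * τ)) =
      Real.exp (k / 2) * Real.exp (-k ^ 2 / (2 * (σ * Real.sqrt τ) ^ 2)) := by
    rw [← Real.exp_add, ← hsq]
    congr 1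
    ring
  rw [he, hsq, hpow, mul_assoc _ (σ ^ 2) τ, hsq]
  generalize σ * Real.sqrt τ = s at *
  subst hτs
  have hG := (Real.exp_pos (-k ^ 2 / (2 * s ^ 2))).ne'
  have hE := (Real.exp_pos (k / 2)).ne'
  have hP : Real.sqrt (2 * Real.pi) ≠ 0 := by positivity
  generalize Real.exp (-k ^ 2 / (2 * s ^ 2)) = G at *
  generalize Real.exp (k / 2) = E at *
  generalize Real.sqrt (2 * Real.pi) = P at *
  generalize snF k s = F at *
  have hs' := hspos.ne'
  field_simp

end
end

section
/- For every real u with |u| < 1/√β_t, the derivative Λ_τ′(u) of the rescaled forward log-mgf is well defined and real for all sufficiently small τ > 0, and lim_{τ→0+} Λ_τ′(u) = 0. -/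
open Filter Topology Asymptotics MeasureTheory

set_option linter.unusedVariables false

noncomputable section


/-- sign convention of the paper: 1 if `0 ≤ x`, -1 otherwise. -/
def sgn' (x : ℝ) : ℝ := if 0 ≤ x then 1 else -1

/-- principal-branch complex square root `d` of the Heston Riccati discriminant. -/
def hestD (κ ρ ξ : ℝ) (w : ℂ) : ℂ :=
  (((κ : ℂ) - (ρ : ℂ) * (ξ : ℂ) * w) ^ 2 + w * (1 - w) * (ξ : ℂ) ^ 2) ^ ((1 : ℂ) / 2)

def hestGamma (κ ρ ξ : ℝ) (w : ℂ) : ℂ :=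
  ((κ : ℂ) - (ρ : ℂ) * (ξ : ℂ) * w - hestD κ ρ ξ w) /
    ((κ : ℂ) - (ρ : ℂ) * (ξ : ℂ) * w + hestD κ ρ ξ w)

def hestB (κ ρ ξ : ℝ) (w : ℂ) (τ : ℝ) : ℂ :=
  (((κ : ℂ) - (ρ : ℂ) * (ξ : ℂ) * w - hestD κ ρ ξ w) / (ξ : ℂ) ^ 2) *
    ((1 - Complex.exp (-(hestD κ ρ ξ w) * (τ : ℂ))) /
      (1 - hestGamma κ ρ ξ w * Complex.exp (-(hestD κ ρ ξ w) * (τ : ℂ))))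

def hestA (κ θ ρ ξ : ℝ) (w : ℂ) (τ : ℝ) : ℂ :=
  ((κ * θ / ξ ^ 2 : ℝ) : ℂ) *
    (((κ : ℂ) - (ρ : ℂ) * (ξ : ℂ) * w - hestD κ ρ ξ w) * (τ : ℂ) -
      2 * Complex.log ((1 - hestGamma κ ρ ξ w * Complex.exp (-(hestD κ ρ ξ w) * (τ : ℂ))) /
        (1 - hestGamma κ ρ ξ w)))

def betaT (κ ξ t : ℝ) : ℝ := ξ ^ 2 * (1 - Real.exp (-(κ * t))) / (4 * κ)

/-- explicit Heston forward log-mgf `G_τ(w)`. -/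
def hestG (κ θ ξ v ρ t : ℝ) (w : ℂ) (τ : ℝ) : ℂ :=
  hestA κ θ ρ ξ w τ +
    hestB κ ρ ξ w τ * (v : ℂ) * ((Real.exp (-(κ * t)) : ℝ) : ℂ) /
      (1 - 2 * (betaT κ ξ t : ℂ) * hestB κ ρ ξ w τ) -
    ((2 * κ * θ / ξ ^ 2 : ℝ) : ℂ) *
      Complex.log (1 - 2 * (betaT κ ξ t : ℂ) * hestB κ ρ ξ w τ)

/-- rescaled forward log-mgf, for complex argument. -/
def hestLambdaC (κ θ ξ v ρ t τ : ℝ) (z : ℂ) : ℂ :=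
  ((Real.sqrt τ : ℝ) : ℂ) * hestG κ θ ξ v ρ t (z / ((Real.sqrt τ : ℝ) : ℂ)) τ

/-- rescaled forward log-mgf `Λ_τ(u) = √τ · G_τ(u/√τ)`. -/
def hestLambda (κ θ ξ v ρ t τ : ℝ) (u : ℝ) : ℂ :=
  hestLambdaC κ θ ξ v ρ t τ (u : ℂ)

/-- `D_{t,τ}`: the maximal open interval containing `0` on which `Λ_τ` is real-valued. -/
def hestDom (κ θ ξ v ρ t τ : ℝ) : Set ℝ :=
  connectedComponentIn (interior {u : ℝ | (hestLambda κ θ ξ v ρ t τ u).im = 0}) 0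


def auxS (z : ℂ) : ℂ := ∑' n : ℕ, z ^ n / ((2 * n + 1).factorial : ℂ)

def auxC (z : ℂ) : ℂ := ∑' n : ℕ, z ^ n / ((2 * n).factorial : ℂ)

lemma auxS_diff : DifferentiableOn ℂ auxS (Metric.ball 0 1) := by
  unfold auxS
  refine Complex.differentiableOn_tsum_of_summable_norm (u := fun n : ℕ => 1 / (n.factorial : ℝ))
    ?_ ?_ Metric.isOpen_ball ?_
  · simpa using Real.summable_pow_div_factorial 1
  · intro n
    fun_prop
  · intro n w hw
    have hw1 : ‖w‖ ≤ 1 := by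
      have := mem_ball_zero_iff.mp hw
      exact this.le
    rw [norm_div, norm_pow, Complex.norm_natCast]
    have h1 : ‖w‖ ^ n ≤ 1 := pow_le_one₀ (norm_nonneg _) hw1
    have h2 : (n.factorial : ℝ) ≤ ((2 * n + 1).factorial : ℝ) := by
      exact_mod_cast Nat.factorial_le (by omega)
    have h3 : (0 : ℝ) < n.factorial := by exact_mod_cast Nat.factorial_pos n
    exact div_le_div₀ zero_le_one h1 h3 h2

lemma auxC_diff : DifferentiableOn ℂ auxC (Metric.ball 0 1) := by
  unfold auxC
  refine Complex.differentiableOn_tsum_of_summable_norm (u := fun n : ℕ => 1 / (n.factorial : ℝ))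
    ?_ ?_ Metric.isOpen_ball ?_
  · simpa using Real.summable_pow_div_factorial 1
  · intro n
    fun_prop
  · intro n w hw
    have hw1 : ‖w‖ ≤ 1 := by
      have := mem_ball_zero_iff.mp hw
      exact this.le
    rw [norm_div, norm_pow, Complex.norm_natCast]
    have h1 : ‖w‖ ^ n ≤ 1 := pow_le_one₀ (norm_nonneg _) hw1
    have h2 : (n.factorial : ℝ) ≤ ((2 * n).factorial : ℝ) := by
      exact_mod_cast Nat.factorial_le (by omega)
    have h3 : (0 : ℝ) < n.factorial := by exact_mod_cast Nat.factorial_pos n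
    exact div_le_div₀ zero_le_one h1 h3 h2

lemma auxC_sq (q : ℂ) : auxC (q ^ 2) = Complex.cosh q := by
  have h := Complex.hasSum_cosh q
  unfold auxC
  rw [← h.tsum_eq]
  simp only [pow_mul]

lemma auxS_sq (q : ℂ) : q * auxS (q ^ 2) = Complex.sinh q := by
  have h := Complex.hasSum_sinh q
  unfold auxS
  rw [← h.tsum_eq, ← tsum_mul_left]
  congr 1
  ext n
  rw [← pow_mul]
  ring

def auxSr (y : ℝ) : ℝ := (auxS (y : ℂ)).re
def auxCr (y : ℝ) : ℝ := (auxC (y : ℂ)).re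

lemma auxSr_cast (y : ℝ) : ((auxSr y : ℝ) : ℂ) = auxS (y : ℂ) := by
  have : auxS (y : ℂ) = ((∑' n : ℕ, y ^ n / ((2 * n + 1).factorial : ℝ) : ℝ) : ℂ) := by
    unfold auxS
    push_cast
    rfl
  unfold auxSr
  rw [this, Complex.ofReal_re]

lemma auxCr_cast (y : ℝ) : ((auxCr y : ℝ) : ℂ) = auxC (y : ℂ) := by
  have : auxC (y : ℂ) = ((∑' n : ℕ, y ^ n / ((2 * n).factorial : ℝ) : ℝ) : ℂ) := by
    unfold auxC
    push_cast
    rfl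
  unfold auxCr
  rw [this, Complex.ofReal_re]

lemma auxSr_zero : auxSr 0 = 1 := by
  unfold auxSr auxS
  rw [tsum_eq_single 0]
  · simp
  · intro n hn
    simp [hn]

lemma auxCr_zero : auxCr 0 = 1 := by
  unfold auxCr auxC
  rw [tsum_eq_single 0]
  · simp
  · intro n hn
    simp [hn]

lemma auxSr_contDiffAt : ContDiffAt ℝ 1 auxSr 0 := by
  have h : ContDiffAt ℂ 1 auxS ((0 : ℝ) : ℂ) := by
    have := auxS_diff.analyticAt (z := 0) (Metric.ball_mem_nhds _ one_pos)
    simpa using this.contDiffAt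
  exact h.real_of_complex

lemma auxCr_contDiffAt : ContDiffAt ℝ 1 auxCr 0 := by
  have h : ContDiffAt ℂ 1 auxC ((0 : ℝ) : ℂ) := by
    have := auxC_diff.analyticAt (z := 0) (Metric.ball_mem_nhds _ one_pos)
    simpa using this.contDiffAt
  exact h.real_of_complex

/-- `s² D(u/s)` -/
def auxN (κ ρ ξ : ℝ) (p : ℝ × ℝ) : ℝ :=
  (κ * p.2 - ρ * ξ * p.1) ^ 2 + p.1 * (p.2 - p.1) * ξ ^ 2

def auxY (κ ρ ξ : ℝ) (p : ℝ × ℝ) : ℝ := p.2 ^ 2 / 4 * auxN κ ρ ξ p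

def auxM (κ ρ ξ : ℝ) (p : ℝ × ℝ) : ℝ :=
  p.2 * (κ * p.2 - ρ * ξ * p.1) / 2 * auxSr (auxY κ ρ ξ p) + auxCr (auxY κ ρ ξ p)

def auxB (κ ρ ξ : ℝ) (p : ℝ × ℝ) : ℝ :=
  p.1 * (p.1 - p.2) / 2 * auxSr (auxY κ ρ ξ p) / auxM κ ρ ξ p

def auxF (κ θ ξ v ρ t : ℝ) (p : ℝ × ℝ) : ℝ :=
  κ * θ / ξ ^ 2 * (p.2 * (κ * p.2 - ρ * ξ * p.1) - 2 * Real.log (auxM κ ρ ξ p)) +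
    auxB κ ρ ξ p * v * Real.exp (-(κ * t)) / (1 - 2 * betaT κ ξ t * auxB κ ρ ξ p) -
    2 * κ * θ / ξ ^ 2 * Real.log (1 - 2 * betaT κ ξ t * auxB κ ρ ξ p)

lemma auxY_zero (κ ρ ξ u : ℝ) : auxY κ ρ ξ (u, 0) = 0 := by simp [auxY]

lemma auxM_zero (κ ρ ξ u : ℝ) : auxM κ ρ ξ (u, 0) = 1 := by
  simp [auxM, auxY_zero, auxCr_zero]

lemma auxB_zero (κ ρ ξ u : ℝ) : auxB κ ρ ξ (u, 0) = u ^ 2 / 2 := by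
  simp [auxB, auxY_zero, auxSr_zero, auxM_zero]
  ring

lemma auxY_cd (κ ρ ξ u : ℝ) : ContDiffAt ℝ 1 (auxY κ ρ ξ) (u, 0) := by
  unfold auxY auxN
  fun_prop

lemma auxSY_cd (κ ρ ξ u : ℝ) : ContDiffAt ℝ 1 (fun p => auxSr (auxY κ ρ ξ p)) (u, 0) := by
  have h : ContDiffAt ℝ 1 auxSr (auxY κ ρ ξ (u, 0)) := by
    rw [auxY_zero]; exact auxSr_contDiffAt
  exact h.comp (u, (0 : ℝ)) (auxY_cd κ ρ ξ u)

lemma auxCY_cd (κ ρ ξ u : ℝ) : ContDiffAt ℝ 1 (fun p => auxCr (auxY κ ρ ξ p)) (u, 0) := by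
  have h : ContDiffAt ℝ 1 auxCr (auxY κ ρ ξ (u, 0)) := by
    rw [auxY_zero]; exact auxCr_contDiffAt
  exact h.comp (u, (0 : ℝ)) (auxY_cd κ ρ ξ u)

lemma auxM_cd (κ ρ ξ u : ℝ) : ContDiffAt ℝ 1 (auxM κ ρ ξ) (u, 0) := by
  have h1 := auxSY_cd κ ρ ξ u
  have h2 := auxCY_cd κ ρ ξ u
  have h3 : ContDiffAt ℝ 1 (fun p : ℝ × ℝ => p.2 * (κ * p.2 - ρ * ξ * p.1) / 2) (u, 0) := by
    fun_prop
  exact (h3.mul h1).add h2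

lemma auxB_cd (κ ρ ξ u : ℝ) : ContDiffAt ℝ 1 (auxB κ ρ ξ) (u, 0) := by
  have h1 := auxSY_cd κ ρ ξ u
  have h3 : ContDiffAt ℝ 1 (fun p : ℝ × ℝ => p.1 * (p.1 - p.2) / 2) (u, 0) := by
    fun_prop
  exact (h3.mul h1).div (auxM_cd κ ρ ξ u) (by rw [auxM_zero]; norm_num)

lemma auxL_cd (κ ρ ξ t u : ℝ) :
    ContDiffAt ℝ 1 (fun p => 1 - 2 * betaT κ ξ t * auxB κ ρ ξ p) (u, 0) :=
  contDiffAt_const.sub (contDiffAt_const.mul (auxB_cd κ ρ ξ u))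

lemma auxF_cd (κ θ ξ v ρ t u : ℝ)
    (h : 0 < 1 - 2 * betaT κ ξ t * auxB κ ρ ξ (u, 0)) :
    ContDiffAt ℝ 1 (auxF κ θ ξ v ρ t) (u, 0) := by
  have hL := auxL_cd κ ρ ξ t u
  have hB := auxB_cd κ ρ ξ u
  have hM := auxM_cd κ ρ ξ u
  have h3 : ContDiffAt ℝ 1 (fun p : ℝ × ℝ => p.2 * (κ * p.2 - ρ * ξ * p.1)) (u, 0) := by
    fun_prop
  have hlM := hM.log (by rw [auxM_zero]; norm_num)
  have hlL := hL.log h.ne'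
  exact ((contDiffAt_const.mul (h3.sub (contDiffAt_const.mul hlM))).add
    (((hB.mul contDiffAt_const).mul contDiffAt_const).div hL h.ne')).sub
    (contDiffAt_const.mul hlL)

lemma hestD_sq (κ ρ ξ : ℝ) (w : ℂ) : (hestD κ ρ ξ w) ^ 2 =
    ((κ : ℂ) - (ρ : ℂ) * (ξ : ℂ) * w) ^ 2 + w * (1 - w) * (ξ : ℂ) ^ 2 := by
  unfold hestD
  rw [← Complex.cpow_nat_mul]
  simp

lemma key_alg (a d E C S q τ M w ξ : ℂ) (hd : d ≠ 0) (had : a + d ≠ 0) (hξ : ξ ≠ 0)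
    (hq : q = d * τ / 2) (hE : E = C - q * S) (hE1 : E * (C + q * S) = 1)
    (hM : M = a * τ / 2 * S + C) (hM0 : M ≠ 0)
    (hdd : d ^ 2 = a ^ 2 + w * (1 - w) * ξ ^ 2) :
    (1 - (a - d) / (a + d) * E ^ 2) / (1 - (a - d) / (a + d)) = E * M ∧
    (a - d) / ξ ^ 2 * ((1 - E ^ 2) / (1 - (a - d) / (a + d) * E ^ 2)) =
      w * (w - 1) * τ / 2 * S / M := by
  have hE0 : E ≠ 0 := left_ne_zero_of_mul_eq_one hE1
  have h1 : 1 - (a - d) / (a + d) * E ^ 2 = 2 * d * E * M / (a + d) := by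
    rw [eq_div_iff had]
    have : (1 - (a - d) / (a + d) * E ^ 2) * (a + d) = (a + d) - (a - d) * E ^ 2 := by
      field_simp
    rw [this, hM]
    have e1 : (a + d) = (a + d) * (E * (C + q * S)) := by rw [hE1, mul_one]
    have e2 : E ^ 2 = E * (C - q * S) := by rw [pow_two]; nth_rewrite 2 [hE]; rfl
    rw [e2]
    nth_rewrite 1 [e1]
    rw [hq]
    ring
  have h2 : 1 - (a - d) / (a + d) = 2 * d / (a + d) := by
    field_simp; ring
  have h3 : 1 - E ^ 2 = E * (2 * (q * S)) := by
    have : 1 - E ^ 2 = E * (C + q * S) - E * (C - q * S) := by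
      rw [hE1, ← hE]; ring
    rw [this]; ring
  constructor
  · rw [h1, h2]; field_simp
  · rw [h1, h3, hq]
    field_simp
    linear_combination (-τ * S) * hdd

lemma key_id (κ θ ξ v ρ t s u : ℝ) (hξ : 0 < ξ) (hs : 0 < s)
    (hN : auxN κ ρ ξ (u, s) < 0 ∨ (0 < auxN κ ρ ξ (u, s) ∧ 0 < κ * s - ρ * ξ * u))
    (hY : |auxY κ ρ ξ (u, s)| < 1) (hM : 0 < auxM κ ρ ξ (u, s))
    (hL : 0 < 1 - 2 * betaT κ ξ t * auxB κ ρ ξ (u, s)) :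
    hestLambda κ θ ξ v ρ t (s ^ 2) u = ((s * auxF κ θ ξ v ρ t (u, s) : ℝ) : ℂ) := by
  have hsq : Real.sqrt (s ^ 2) = s := Real.sqrt_sq hs.le
  have hsC : (s : ℂ) ≠ 0 := by exact_mod_cast hs.ne'
  have hξC : (ξ : ℂ) ≠ 0 := by exact_mod_cast hξ.ne'
  unfold hestLambda hestLambdaC
  rw [hsq]
  set w : ℂ := (u : ℂ) / (s : ℂ) with hw
  have hdd := hestD_sq κ ρ ξ w
  set d := hestD κ ρ ξ w with hd
  set a : ℂ := (κ : ℂ) - (ρ : ℂ) * (ξ : ℂ) * w with ha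
  have haR : a = ((κ * s - ρ * ξ * u) / s : ℝ) := by
    rw [ha, hw]; push_cast; field_simp
  have hDR : a ^ 2 + w * (1 - w) * (ξ : ℂ) ^ 2 = ((auxN κ ρ ξ (u, s) / s ^ 2 : ℝ) : ℂ) := by
    rw [haR, hw]; unfold auxN; push_cast; field_simp
  have hN0 : auxN κ ρ ξ (u, s) / s ^ 2 ≠ 0 := by
    have : auxN κ ρ ξ (u, s) ≠ 0 := by
      rcases hN with h | h
      · exact h.ne
      · exact h.1.ne'
    positivity
  have hd0 : d ≠ 0 := by
    intro h0
    rw [hDR, h0] at hdd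
    apply hN0
    have : ((auxN κ ρ ξ (u, s) / s ^ 2 : ℝ) : ℂ) = 0 := by rw [← hdd]; simp
    exact_mod_cast this
  have had : a + d ≠ 0 := by
    intro h0
    rcases hN with h | ⟨h, h'⟩
    · have hda : d = -a := by linear_combination h0
      rw [hDR, hda, haR] at hdd
      have h5 : (-((κ * s - ρ * ξ * u) / s)) ^ 2 = auxN κ ρ ξ (u, s) / s ^ 2 := by
        exact_mod_cast hdd
      have h6 : auxN κ ρ ξ (u, s) / s ^ 2 < 0 := div_neg_of_neg_of_pos h (by positivity)
      have h7 := sq_nonneg (-((κ * s - ρ * ξ * u) / s))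
      linarith
    · have hdR : d = (((auxN κ ρ ξ (u, s) / s ^ 2) ^ ((1 : ℝ) / 2) : ℝ) : ℂ) := by
        rw [hd]; unfold hestD
        rw [← ha, hDR, Complex.ofReal_cpow (by positivity)]
        norm_num
      rw [haR, hdR] at h0
      have h8 : (κ * s - ρ * ξ * u) / s + (auxN κ ρ ξ (u, s) / s ^ 2) ^ ((1 : ℝ) / 2) = 0 := by
        exact_mod_cast h0
      have : 0 < (κ * s - ρ * ξ * u) / s + (auxN κ ρ ξ (u, s) / s ^ 2) ^ ((1 : ℝ) / 2) := by
        positivity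
      linarith
  set q : ℂ := d * ((s ^ 2 : ℝ) : ℂ) / 2 with hq
  have hqy : q ^ 2 = ((auxY κ ρ ξ (u, s) : ℝ) : ℂ) := by
    have : q ^ 2 = d ^ 2 * (s : ℂ) ^ 4 / 4 := by rw [hq]; push_cast; ring
    rw [this, hdd, hDR]; unfold auxY; push_cast; field_simp
  have hqn : ‖q‖ < 1 := by
    have : ‖q‖ ^ 2 < 1 := by
      rw [← norm_pow, hqy, Complex.norm_real]; exact hY
    nlinarith [norm_nonneg q]
  have hcosh : ((auxCr (auxY κ ρ ξ (u, s)) : ℝ) : ℂ) = Complex.cosh q := by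
    rw [auxCr_cast, ← hqy, auxC_sq]
  have hsinh : q * ((auxSr (auxY κ ρ ξ (u, s)) : ℝ) : ℂ) = Complex.sinh q := by
    rw [auxSr_cast, ← hqy, auxS_sq]
  have hMC : ((auxM κ ρ ξ (u, s) : ℝ) : ℂ) = a * ((s ^ 2 : ℝ) : ℂ) / 2 *
      ((auxSr (auxY κ ρ ξ (u, s)) : ℝ) : ℂ) + ((auxCr (auxY κ ρ ξ (u, s)) : ℝ) : ℂ) := by
    rw [haR]; unfold auxM; push_cast; field_simp
  have hM0 : ((auxM κ ρ ξ (u, s) : ℝ) : ℂ) ≠ 0 := by exact_mod_cast hM.ne'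
  have hE : Complex.exp (-q) = ((auxCr (auxY κ ρ ξ (u, s)) : ℝ) : ℂ) -
      q * ((auxSr (auxY κ ρ ξ (u, s)) : ℝ) : ℂ) := by
    rw [hcosh, hsinh, Complex.cosh_sub_sinh]
  have hE1 : Complex.exp (-q) * (((auxCr (auxY κ ρ ξ (u, s)) : ℝ) : ℂ) +
      q * ((auxSr (auxY κ ρ ξ (u, s)) : ℝ) : ℂ)) = 1 := by
    rw [hcosh, hsinh, Complex.cosh_add_sinh, ← Complex.exp_add]; simp
  have hEE : Complex.exp (-d * ((s ^ 2 : ℝ) : ℂ)) = Complex.exp (-q) ^ 2 := by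
    rw [← Complex.exp_nat_mul, hq]; congr 1; push_cast; ring
  obtain ⟨k1, k2⟩ := key_alg a d _ _ _ q _ _ w ξ hd0 had hξC hq hE hE1 hMC hM0 hdd
  have hB : hestB κ ρ ξ w (s ^ 2) = ((auxB κ ρ ξ (u, s) : ℝ) : ℂ) := by
    unfold hestB hestGamma
    rw [← ha, ← hd, hEE, k2]
    unfold auxB
    rw [hw]; push_cast; field_simp
  have hlog : Complex.log (Complex.exp (-q) * ((auxM κ ρ ξ (u, s) : ℝ) : ℂ)) =
      (Real.log (auxM κ ρ ξ (u, s)) : ℂ) - q := by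
    rw [Complex.log_mul_ofReal _ hM _ (Complex.exp_ne_zero _)]
    have him : |(-q).im| < 1 := by
      have := Complex.abs_im_le_norm (-q)
      rw [norm_neg] at this
      linarith
    rw [abs_lt] at him
    rw [Complex.log_exp (by linarith [Real.pi_gt_three]) (by linarith [Real.pi_gt_three])]
    ring
  have hA : hestA κ θ ρ ξ w (s ^ 2) = ((κ * θ / ξ ^ 2 * (s * (κ * s - ρ * ξ * u) -
      2 * Real.log (auxM κ ρ ξ (u, s))) : ℝ) : ℂ) := by
    unfold hestA hestGamma
    rw [← ha, ← hd, hEE, k1, hlog, hq, haR]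
    push_cast
    field_simp
    ring
  unfold hestG
  rw [hA, hB]
  have hLc : (1 - 2 * (betaT κ ξ t : ℂ) * ((auxB κ ρ ξ (u, s) : ℝ) : ℂ)) =
      ((1 - 2 * betaT κ ξ t * auxB κ ρ ξ (u, s) : ℝ) : ℂ) := by push_cast; ring
  rw [hLc, ← Complex.ofReal_log hL.le]
  unfold auxF
  push_cast
  ring

theorem stmt11 (κ θ ξ v ρ t : ℝ) (hκ : 0 < κ) (hθ : 0 < θ) (hξ : 0 < ξ)
    (hv : 0 < v) (hρ : ρ ∈ Set.Ioo (-1 : ℝ) 1) (ht : 0 < t)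
    (u : ℝ) (hu : |u| < 1 / Real.sqrt (betaT κ ξ t)) :
    (∀ᶠ τ in 𝓝[>] (0 : ℝ),
      DifferentiableAt ℝ (hestLambda κ θ ξ v ρ t τ) u ∧
      (deriv (hestLambda κ θ ξ v ρ t τ) u).im = 0) ∧
    Tendsto (fun τ : ℝ => deriv (hestLambda κ θ ξ v ρ t τ) u)
      (𝓝[>] (0 : ℝ)) (𝓝 0) := by
  have hβ : 0 < betaT κ ξ t := by
    unfold betaT
    have : Real.exp (-(κ * t)) < 1 := by
      rw [Real.exp_lt_one_iff]; have := mul_pos hκ ht; linarith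
    have h2 : 0 < 1 - Real.exp (-(κ * t)) := by linarith
    positivity
  have hL0 : 0 < 1 - 2 * betaT κ ξ t * auxB κ ρ ξ (u, 0) := by
    rw [auxB_zero]
    have hsb := Real.sqrt_pos.mpr hβ
    rw [lt_div_iff₀ hsb] at hu
    have h0 : 0 ≤ |u| * Real.sqrt (betaT κ ξ t) := by positivity
    have h1 : (|u| * Real.sqrt (betaT κ ξ t)) ^ 2 < 1 := by nlinarith
    rw [mul_pow, sq_abs, Real.sq_sqrt hβ.le] at h1
    linarith
  have hF := auxF_cd κ θ ξ v ρ t u hL0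
  -- open conditions near `(u, 0)`
  have hQ : ∀ᶠ p in 𝓝 (u, (0 : ℝ)), (|auxY κ ρ ξ p| < 1 ∧ 0 < auxM κ ρ ξ p ∧
      0 < 1 - 2 * betaT κ ξ t * auxB κ ρ ξ p) ∧ DifferentiableAt ℝ (auxF κ θ ξ v ρ t) p := by
    have e1 := (auxY_cd κ ρ ξ u).continuousAt.abs.eventually_lt_const (u := 1)
      (by simp [auxY_zero])
    have e2 := (auxM_cd κ ρ ξ u).continuousAt.eventually_const_lt (u := 0)
      (by simp [auxM_zero])
    have e3 := (auxL_cd κ ρ ξ t u).continuousAt.eventually_const_lt (u := 0) hL0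
    have e4 := hF.eventually (by simp)
    filter_upwards [e1, e2, e3, e4] with p h1 h2 h3 h4
    exact ⟨⟨h1, h2, h3⟩, h4.differentiableAt (by simp)⟩
  have hpath : Tendsto (fun τ : ℝ => (u, Real.sqrt τ)) (𝓝[>] (0 : ℝ)) (𝓝 (u, (0 : ℝ))) := by
    have : Tendsto (fun τ : ℝ => (u, Real.sqrt τ)) (𝓝 (0 : ℝ)) (𝓝 (u, Real.sqrt 0)) :=
      Continuous.tendsto (by fun_prop) 0
    rw [Real.sqrt_zero] at this
    exact this.mono_left nhdsWithin_le_nhds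
  have hNcont : Continuous (auxN κ ρ ξ) := by unfold auxN; fun_prop
  have hNev : ∀ᶠ τ in 𝓝[>] (0 : ℝ), auxN κ ρ ξ (u, Real.sqrt τ) < 0 ∨
      (0 < auxN κ ρ ξ (u, Real.sqrt τ) ∧ 0 < κ * Real.sqrt τ - ρ * ξ * u) := by
    by_cases hu0 : u = 0
    · filter_upwards [self_mem_nhdsWithin] with τ hτ
      have hs := Real.sqrt_pos.mpr hτ
      right
      subst hu0
      unfold auxN
      simp only [mul_zero, sub_zero, zero_mul, add_zero]
      constructor <;> positivity
    · have h0 : auxN κ ρ ξ (u, 0) < 0 := by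
        have : auxN κ ρ ξ (u, 0) = -((1 - ρ) * (1 + ρ) * (ξ * u) ^ 2) := by
          unfold auxN; ring
        rw [this]
        have a1 : 0 < 1 - ρ := by linarith [hρ.2]
        have a2 : 0 < 1 + ρ := by linarith [hρ.1]
        have : 0 < (1 - ρ) * (1 + ρ) * (ξ * u) ^ 2 := by positivity
        linarith
      have := hpath.eventually (hNcont.continuousAt.eventually_lt_const h0)
      filter_upwards [this] with τ h
      exact Or.inl h
  have hder : ∀ᶠ τ in 𝓝[>] (0 : ℝ), HasDerivAt (hestLambda κ θ ξ v ρ t τ)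
      ((Real.sqrt τ * fderiv ℝ (auxF κ θ ξ v ρ t) (u, Real.sqrt τ) (1, 0) : ℝ) : ℂ) u := by
    filter_upwards [self_mem_nhdsWithin, hNev, hpath.eventually hQ.eventually_nhds]
      with τ hτ hN hQ'
    have hs := Real.sqrt_pos.mpr hτ
    have hτs : (Real.sqrt τ) ^ 2 = τ := Real.sq_sqrt (le_of_lt hτ)
    set s := Real.sqrt τ with hsdef
    have hdF := hQ'.self_of_nhds.2
    have hline : HasDerivAt (fun x : ℝ => (x, s)) ((1 : ℝ), (0 : ℝ)) u :=
      (hasDerivAt_id u).prodMk (hasDerivAt_const u s)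
    have h1 : HasDerivAt (fun x : ℝ => s * auxF κ θ ξ v ρ t (x, s))
        (s * fderiv ℝ (auxF κ θ ξ v ρ t) (u, s) (1, 0)) u :=
      by
      have h0 := HasFDerivAt.comp_hasDerivAt (l := auxF κ θ ξ v ρ t) u hdF.hasFDerivAt hline
      exact h0.const_mul s
    have hcl : Tendsto (fun x : ℝ => (x, s)) (𝓝 u) (𝓝 (u, s)) := hline.continuousAt
    have hNx : ∀ᶠ x in 𝓝 u, auxN κ ρ ξ (x, s) < 0 ∨
        (0 < auxN κ ρ ξ (x, s) ∧ 0 < κ * s - ρ * ξ * x) := by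
      rcases hN with h | ⟨h, h'⟩
      · filter_upwards [hcl.eventually (hNcont.continuousAt.eventually_lt_const h)] with x hx
        exact Or.inl hx
      · have hc : ContinuousAt (fun x : ℝ => κ * s - ρ * ξ * x) u := by fun_prop
        filter_upwards [hcl.eventually (hNcont.continuousAt.eventually_const_lt h),
          hc.eventually_const_lt h'] with x hx hx'
        exact Or.inr ⟨hx, hx'⟩
    refine h1.ofReal_comp.congr_of_eventuallyEq ?_
    filter_upwards [hNx, hcl.eventually hQ'] with x hx hx'
    have := key_id κ θ ξ v ρ t s x hξ hs hx hx'.1.1 hx'.1.2.1 hx'.1.2.2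
    rw [hτs] at this
    exact this
  refine ⟨?_, ?_⟩
  · filter_upwards [hder] with τ h
    refine ⟨h.differentiableAt, ?_⟩
    rw [h.deriv, Complex.ofReal_im]
  · have hfc : ContinuousAt (fderiv ℝ (auxF κ θ ξ v ρ t)) (u, 0) :=
      (hF.fderiv_right (m := 0) (by simp)).continuousAt
    have h1 : Tendsto (fun τ : ℝ => fderiv ℝ (auxF κ θ ξ v ρ t) (u, Real.sqrt τ) (1, 0))
        (𝓝[>] (0 : ℝ)) (𝓝 (fderiv ℝ (auxF κ θ ξ v ρ t) (u, 0) (1, 0))) :=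
      by
      have hev : Continuous (fun L : (ℝ × ℝ) →L[ℝ] ℝ => L (1, 0)) := by fun_prop
      exact (hev.tendsto _).comp (hfc.tendsto.comp hpath)
    have h2 : Tendsto (fun τ : ℝ => Real.sqrt τ) (𝓝[>] (0 : ℝ)) (𝓝 0) :=
      (continuous_snd.tendsto _).comp hpath
    have h3 := h2.mul h1
    rw [zero_mul] at h3
    have h4 := (Complex.continuous_ofReal.tendsto 0).comp h3
    rw [Complex.ofReal_zero] at h4
    refine h4.congr' ?_
    filter_upwards [hder] with τ h
    exact h.deriv.symm

end
end

section
/- For every real k ≠ 0, u*_τ(k) = a₀(k) + a₁(k)·τ^{1/4} + a₂(k)·τ^{1/2} + a₃(k)·τ^{3/4} + O(τ) as τ → 0+. -/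
open Filter Topology Asymptotics MeasureTheory

set_option linter.unusedVariables false

noncomputable section


def B1hat (ρ ξ u : ℝ) : ℝ := u / 4 * (u ^ 2 * ρ * ξ - 2)
/-- the derivative of `B1hat` in `u`. -/
def B1hat' (ρ ξ u : ℝ) : ℝ := (3 * u ^ 2 * ρ * ξ - 2) / 4

def coefA0 (κ θ ξ v ρ t k : ℝ) : ℝ := sgn' k / Real.sqrt (betaT κ ξ t)

def coefA1 (κ θ ξ v ρ t k : ℝ) : ℝ :=
  -(coefA0 κ θ ξ v ρ t k) * Real.sqrt v * Real.exp (-(κ * t) / 2) /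
    (2 * Real.sqrt |k| * betaT κ ξ t ^ ((1 : ℝ) / 4))

def coefA2 (κ θ ξ v ρ t k : ℝ) : ℝ :=
  -(κ * θ) / (k * ξ ^ 2) - B1hat ρ ξ (coefA0 κ θ ξ v ρ t k) / coefA0 κ θ ξ v ρ t k

def coefA3 (κ θ ξ v ρ t k : ℝ) : ℝ :=
  (2 * betaT κ ξ t * coefA1 κ θ ξ v ρ t k ^ 3 / (ξ ^ 4 * v ^ 2)) *
    (ξ ^ 2 * v * betaT κ ξ t * Real.exp (κ * t) *
        (|k| * ξ ^ 2 * Real.sqrt (betaT κ ξ t) * B1hat ρ ξ (coefA0 κ θ ξ v ρ t k) -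
          k * ξ ^ 2 * B1hat' ρ ξ (coefA0 κ θ ξ v ρ t k) - κ * θ) +
      (2 * κ * θ * betaT κ ξ t * Real.exp (κ * t)) ^ 2 - ξ ^ 4 * v ^ 2 / 16)

def coefE0 (κ θ ξ v ρ t k : ℝ) : ℝ := -2 * coefA1 κ θ ξ v ρ t k / coefA0 κ θ ξ v ρ t k

def coefR (κ θ ξ v ρ t k : ℝ) : ℝ :=
  coefA1 κ θ ξ v ρ t k ^ 2 / 2 - κ * θ / (|k| * ξ ^ 2 * Real.sqrt (betaT κ ξ t))

def coefE1 (κ θ ξ v ρ t k : ℝ) : ℝ := -2 * betaT κ ξ t * coefR κ θ ξ v ρ t k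

def coefE2 (κ θ ξ v ρ t k : ℝ) : ℝ :=
  -2 * betaT κ ξ t *
    (coefA1 κ θ ξ v ρ t k * coefA2 κ θ ξ v ρ t k + coefA0 κ θ ξ v ρ t k * coefA3 κ θ ξ v ρ t k +
      coefA1 κ θ ξ v ρ t k * B1hat' ρ ξ (coefA0 κ θ ξ v ρ t k))

def coefZeta (κ θ ξ v ρ t k : ℝ) : ℝ :=
  2 * Real.sqrt v * Real.exp (-(κ * t) / 2) / coefE0 κ θ ξ v ρ t k ^ ((3 : ℝ) / 2)

def coefPsi0 (κ θ ξ v ρ t k : ℝ) : ℝ :=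
  (coefA0 κ θ ξ v ρ t k * v * Real.exp (-(κ * t)) / coefE0 κ θ ξ v ρ t k ^ 3) *
    (coefE0 κ θ ξ v ρ t k ^ 2 +
      coefA0 κ θ ξ v ρ t k * betaT κ ξ t *
        (3 * coefA1 κ θ ξ v ρ t k * coefE0 κ θ ξ v ρ t k -
          2 * coefA0 κ θ ξ v ρ t k * coefE1 κ θ ξ v ρ t k))

def coefPsi1 (κ θ ξ v ρ t k : ℝ) : ℝ :=
  -4 * coefA0 κ θ ξ v ρ t k * v * betaT κ ξ t * Real.exp (-(κ * t)) / coefE0 κ θ ξ v ρ t k ^ 4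

def coefPsi2 (κ θ ξ v ρ t k : ℝ) : ℝ :=
  (v * Real.exp (-(κ * t)) / (2 * coefE0 κ θ ξ v ρ t k ^ 4)) *
    (4 * coefA0 κ θ ξ v ρ t k * betaT κ ξ t *
        (3 * coefA0 κ θ ξ v ρ t k * coefE1 κ θ ξ v ρ t k -
          4 * coefA1 κ θ ξ v ρ t k * coefE0 κ θ ξ v ρ t k) -
      5 * coefE0 κ θ ξ v ρ t k ^ 2)

def coefPsi3 (κ θ ξ v ρ t k : ℝ) : ℝ :=
  8 * v * betaT κ ξ t * Real.exp (-(κ * t)) / coefE0 κ θ ξ v ρ t k ^ 5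

def coefPsi4 (κ θ ξ v ρ t k : ℝ) : ℝ :=
  (v * Real.exp (-(κ * t)) / (2 * coefE0 κ θ ξ v ρ t k ^ 3)) *
    ((coefE1 κ θ ξ v ρ t k ^ 2 - coefE0 κ θ ξ v ρ t k * coefE2 κ θ ξ v ρ t k) / betaT κ ξ t -
      2 * coefA0 κ θ ξ v ρ t k * coefA1 κ θ ξ v ρ t k * coefE0 κ θ ξ v ρ t k *
        coefE1 κ θ ξ v ρ t k +
      2 * coefE0 κ θ ξ v ρ t k ^ 2 * coefR κ θ ξ v ρ t k)

def coefPhi2a (κ θ ξ v ρ t k : ℝ) : ℝ :=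
  coefPsi2 κ θ ξ v ρ t k - coefPsi0 κ θ ξ v ρ t k ^ 2 / 2 -
    (4 * κ * θ * betaT κ ξ t / ξ ^ 2) * (2 * κ * θ + ξ ^ 2) / (coefE0 κ θ ξ v ρ t k ^ 2 * ξ ^ 2) -
    (4 * κ * θ * betaT κ ξ t / ξ ^ 2) *
      (coefA0 κ θ ξ v ρ t k * coefPsi0 κ θ ξ v ρ t k / coefE0 κ θ ξ v ρ t k)

def coefPhi2b (κ θ ξ v ρ t k : ℝ) : ℝ :=
  coefPsi3 κ θ ξ v ρ t k - coefPsi0 κ θ ξ v ρ t k * coefPsi1 κ θ ξ v ρ t k -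
    (4 * κ * θ * betaT κ ξ t / ξ ^ 2) *
      (coefA0 κ θ ξ v ρ t k * coefPsi1 κ θ ξ v ρ t k / coefE0 κ θ ξ v ρ t k)

def coefPhi2c (κ θ ξ v ρ t k : ℝ) : ℝ := -(coefPsi1 κ θ ξ v ρ t k ^ 2) / 2

def coefC0 (κ θ ξ v ρ t k : ℝ) : ℝ := 2 * |coefA1 κ θ ξ v ρ t k * k|

def coefC1 (κ θ ξ v ρ t k : ℝ) : ℝ :=
  (v * Real.exp (-(κ * t)) / coefE0 κ θ ξ v ρ t k) *
      (coefA0 κ θ ξ v ρ t k * coefA1 κ θ ξ v ρ t k -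
        coefE1 κ θ ξ v ρ t k / (2 * betaT κ ξ t * coefE0 κ θ ξ v ρ t k)) -
    coefA2 κ θ ξ v ρ t k * k

def coefC2 (κ θ ξ v ρ t k : ℝ) : ℝ := coefE0 κ θ ξ v ρ t k ^ (-(2 * κ * θ / ξ ^ 2))

def coefZ1 (κ θ ξ v ρ t k : ℝ) : ℝ :=
  coefPsi4 κ θ ξ v ρ t k - coefA3 κ θ ξ v ρ t k * k -
    (2 * κ * θ / ξ ^ 2) * (coefE1 κ θ ξ v ρ t k / coefE0 κ θ ξ v ρ t k)

def coefP1 (κ θ ξ v ρ t k : ℝ) : ℝ :=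
  coefE0 κ θ ξ v ρ t k + coefPhi2a κ θ ξ v ρ t k / coefZeta κ θ ξ v ρ t k ^ 2 +
    3 * coefPhi2b κ θ ξ v ρ t k / coefZeta κ θ ξ v ρ t k ^ 4 +
    15 * coefPhi2c κ θ ξ v ρ t k / coefZeta κ θ ξ v ρ t k ^ 6

def phi1C (κ θ ξ v ρ t k u : ℝ) : ℂ :=
  Complex.I * (u : ℂ) *
      ((coefPsi0 κ θ ξ v ρ t k +
          4 * coefA0 κ θ ξ v ρ t k * κ * θ * betaT κ ξ t / (coefE0 κ θ ξ v ρ t k * ξ ^ 2) : ℝ) : ℂ) +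
    Complex.I * (u : ℂ) ^ 3 * ((coefPsi1 κ θ ξ v ρ t k : ℝ) : ℂ)

def phi2R (κ θ ξ v ρ t k u : ℝ) : ℝ :=
  u ^ 2 * coefPhi2a κ θ ξ v ρ t k + u ^ 4 * coefPhi2b κ θ ξ v ρ t k +
    u ^ 6 * coefPhi2c κ θ ξ v ρ t k


/-- auxiliary entire function. -/
def hsE (j : ℕ) (x : ℝ) : ℝ := ∑' n : ℕ, x ^ n / ((2 * n + j).factorial : ℝ)

lemma hsE_radius (j : ℕ) :
    (FormalMultilinearSeries.ofScalars ℝ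
      (fun n : ℕ => (1 : ℝ) / ((2 * n + j).factorial : ℝ))).radius = ⊤ := by
  apply FormalMultilinearSeries.ofScalars_radius_eq_top_of_tendsto
  · exact Eventually.of_forall fun n => by positivity
  · refine squeeze_zero (fun n => by positivity) (g := fun n : ℕ => 1 / ((n : ℝ) + 1)) ?_
      tendsto_one_div_add_atTop_nhds_zero_nat
    intro n
    have h2 : 2 * n.succ + j = (2 * n + j) + 1 + 1 := by simp; ring
    have hf : 0 < ((2 * n + j).factorial : ℝ) := by positivity
    rw [h2, Nat.factorial_succ, Nat.factorial_succ, Real.norm_of_nonneg (by positivity),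
      Real.norm_of_nonneg (by positivity)]
    push_cast
    rw [div_div_div_eq, div_le_div_iff₀ (by positivity) (by positivity)]
    have hn : (0 : ℝ) ≤ n := by positivity
    have hj : (0 : ℝ) ≤ j := by positivity
    have : (n : ℝ) + 1 ≤ (2 * n + j + 1 + 1) * (2 * n + j + 1) := by nlinarith
    nlinarith

lemma hsE_eq (j : ℕ) : hsE j = (FormalMultilinearSeries.ofScalars ℝ
      (fun n : ℕ => (1 : ℝ) / ((2 * n + j).factorial : ℝ))).sum := by
  ext x
  rw [← FormalMultilinearSeries.ofScalarsSum, FormalMultilinearSeries.ofScalars_sum_eq]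
  unfold hsE
  congr 1
  ext n
  simp [div_eq_inv_mul]

lemma hsE_fps (j : ℕ) : HasFPowerSeriesOnBall (hsE j) (FormalMultilinearSeries.ofScalars ℝ
      (fun n : ℕ => (1 : ℝ) / ((2 * n + j).factorial : ℝ))) 0 ⊤ := by
  rw [hsE_eq, ← hsE_radius j]
  exact FormalMultilinearSeries.hasFPowerSeriesOnBall _ (by rw [hsE_radius]; simp)

lemma hsE_contDiff (j : ℕ) {n : WithTop ℕ∞} : ContDiff ℝ n (hsE j) := by
  have h := (hsE_fps j).analyticOnNhd
  rw [contDiff_iff_contDiffAt]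
  intro x
  exact (h x (by simp)).contDiffAt

lemma hsE_hasSum (j : ℕ) (x : ℝ) :
    HasSum (fun n : ℕ => x ^ n / ((2 * n + j).factorial : ℝ)) (hsE j x) := by
  have h := (hsE_fps j).hasSum (y := x) (by simp)
  rw [zero_add] at h
  have he : (fun n : ℕ => x ^ n / ((2 * n + j).factorial : ℝ)) = fun n : ℕ =>
      (FormalMultilinearSeries.ofScalars ℝ
        (fun n : ℕ => (1 : ℝ) / ((2 * n + j).factorial : ℝ))) n (fun _ => x) := by
    ext n
    rw [FormalMultilinearSeries.ofScalars_apply_eq]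
    simp [div_eq_inv_mul]
  rw [he]
  exact h

lemma cosh_hsE (z : ℂ) (x : ℝ) (h : z ^ 2 = (x : ℂ)) :
    Complex.cosh z = ((1 + x * hsE 2 x : ℝ) : ℂ) := by
  have h1 := Complex.hasSum_cosh z
  have h2 : HasSum (fun n : ℕ => ((x * (x ^ n / ((2 * n + 2).factorial : ℝ)) : ℝ) : ℂ))
      ((x * hsE 2 x : ℝ) : ℂ) := Complex.hasSum_ofReal.mpr ((hsE_hasSum 2 x).mul_left x)
  have h3 : HasSum (fun n : ℕ => z ^ (2 * n) / ((2 * n).factorial : ℂ))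
      (((x * hsE 2 x : ℝ) : ℂ) + ∑ i ∈ Finset.range 1, z ^ (2 * i) / ((2 * i).factorial : ℂ)) := by
    rw [← hasSum_nat_add_iff]
    refine (iff_of_eq (congrArg (fun f => HasSum f _) (funext fun n => ?_))).mp h2
    symm
    rw [pow_mul, h, show 2 * (n + 1) = 2 * n + 2 by ring]
    push_cast
    ring
  rw [h1.unique h3]
  simp
  ring

lemma sinh_hsE (z : ℂ) (x : ℝ) (h : z ^ 2 = (x : ℂ)) :
    Complex.sinh z = z * ((1 + x * hsE 3 x : ℝ) : ℂ) := by
  have h1 := Complex.hasSum_sinh z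
  have h2 : HasSum (fun n : ℕ => z * ((x * (x ^ n / ((2 * n + 3).factorial : ℝ)) : ℝ) : ℂ))
      (z * ((x * hsE 3 x : ℝ) : ℂ)) :=
    (Complex.hasSum_ofReal.mpr ((hsE_hasSum 3 x).mul_left x)).mul_left z
  have h3 : HasSum (fun n : ℕ => z ^ (2 * n + 1) / ((2 * n + 1).factorial : ℂ))
      (z * ((x * hsE 3 x : ℝ) : ℂ) +
        ∑ i ∈ Finset.range 1, z ^ (2 * i + 1) / ((2 * i + 1).factorial : ℂ)) := by
    rw [← hasSum_nat_add_iff]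
    refine (iff_of_eq (congrArg (fun f => HasSum f _) (funext fun n => ?_))).mp h2
    symm
    rw [pow_succ, pow_mul, h, show 2 * (n + 1) + 1 = 2 * n + 3 by ring]
    push_cast
    ring
  rw [h1.unique h3]
  simp
  ring

lemma contDiff_bound (g : ℝ → ℝ → ℝ) (hg : ContDiff ℝ 1 (fun p : ℝ × ℝ => g p.1 p.2)) (R : ℝ) :
    ∃ C : ℝ, 0 < C ∧ ∀ s u : ℝ, |s| ≤ 1 → |u| ≤ R →
      |g s u| ≤ C ∧ ∃ g' : ℝ, HasDerivAt (g s) g' u ∧ |g'| ≤ C := by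
  have hK : IsCompact (Set.Icc (-1 : ℝ) 1 ×ˢ Set.Icc (-R) R) := isCompact_Icc.prod isCompact_Icc
  obtain ⟨C1, hC1⟩ := hK.exists_bound_of_continuousOn (f := fun p : ℝ × ℝ => g p.1 p.2)
    hg.continuous.continuousOn
  obtain ⟨C2, hC2⟩ := hK.exists_bound_of_continuousOn
    (f := fun p : ℝ × ℝ => fderiv ℝ (fun p : ℝ × ℝ => g p.1 p.2) p ((0 : ℝ), (1 : ℝ)))
    ((hg.continuous_fderiv (by simp)).clm_apply continuous_const).continuousOn
  refine ⟨max 1 (max C1 C2), by positivity, fun s u hs hu => ?_⟩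
  have hmem : (s, u) ∈ Set.Icc (-1 : ℝ) 1 ×ˢ Set.Icc (-R) R := ⟨abs_le.mp hs, abs_le.mp hu⟩
  refine ⟨(hC1 _ hmem).trans (by simp), _, ?_, (hC2 _ hmem).trans (by simp)⟩
  have h1 := (hg.differentiable (by simp) (s, u)).hasFDerivAt
  have h2 : HasDerivAt (fun u : ℝ => (s, u)) ((0 : ℝ), (1 : ℝ)) u :=
    (hasDerivAt_const u s).prodMk (hasDerivAt_id u)
  exact h1.comp_hasDerivAt u h2

lemma riccati_ident (c d T W X F : ℂ) (hd : d ≠ 0) (hcd : c + d ≠ 0) (hX : X ≠ 0)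
    (hW : c ^ 2 - d ^ 2 = W * X ^ 2)
    (hF : c * Complex.sinh (d * T / 2) + d * Complex.cosh (d * T / 2) = d * F) (hF0 : F ≠ 0) :
    (1 - (c - d) / (c + d) * Complex.exp (-d * T)) / (1 - (c - d) / (c + d)) =
        Complex.exp (-(d * T / 2)) * F ∧
    (c - d) / X ^ 2 * ((1 - Complex.exp (-d * T)) / (1 - (c - d) / (c + d) * Complex.exp (-d * T)))
      = W * Complex.sinh (d * T / 2) / (d * F) := by
  set e := Complex.exp (d * T / 2) with he
  have he0 : e ≠ 0 := Complex.exp_ne_zero _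
  have h1 : Complex.exp (-(d * T / 2)) = e⁻¹ := by rw [Complex.exp_neg]
  have h2 : Complex.exp (-d * T) = e⁻¹ ^ 2 := by
    rw [← h1, ← Complex.exp_nat_mul]; congr 1; push_cast; ring
  have hs : Complex.sinh (d * T / 2) = (e - e⁻¹) / 2 := by rw [Complex.sinh, h1]
  have hc : Complex.cosh (d * T / 2) = (e + e⁻¹) / 2 := by rw [Complex.cosh, h1]
  rw [h1, h2, hs]
  rw [hs, hc] at hF
  have h3 : 1 - (c - d) / (c + d) * e⁻¹ ^ 2 = 2 * e⁻¹ * (d * F) / (c + d) := by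
    rw [← hF]; field_simp; ring
  have h4 : 1 - (c - d) / (c + d) = 2 * d / (c + d) := by field_simp; ring
  rw [h3, h4]
  constructor
  · field_simp
  · have hWe : W = (c ^ 2 - d ^ 2) / X ^ 2 := by rw [hW]; field_simp
    rw [hWe]
    field_simp
    ring

def qf (κ ρ ξ s u : ℝ) : ℝ := (κ * s - ρ * ξ * u) ^ 2 + (u * s - u ^ 2) * ξ ^ 2
def xf (κ ρ ξ s u : ℝ) : ℝ := s ^ 2 * qf κ ρ ξ s u / 4
def g2f (κ ρ ξ s u : ℝ) : ℝ := qf κ ρ ξ s u / 4 * hsE 3 (xf κ ρ ξ s u)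
def f2f (κ ρ ξ s u : ℝ) : ℝ :=
  qf κ ρ ξ s u / 4 * hsE 2 (xf κ ρ ξ s u) + κ / 2 * (1 + s ^ 2 * g2f κ ρ ξ s u) -
    s * ρ * ξ * u / 2 * g2f κ ρ ξ s u
def Ff (κ ρ ξ s u : ℝ) : ℝ := 1 - s * ρ * ξ * u / 2 + s ^ 2 * f2f κ ρ ξ s u
def Nf (κ ρ ξ s u : ℝ) : ℝ :=
  (u ^ 2 - u * s) * g2f κ ρ ξ s u / 2 - (u ^ 2 / 2 + s * B1hat ρ ξ u) * f2f κ ρ ξ s u +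
    B1hat ρ ξ u * ρ * ξ * u / 2
def Bf (κ ρ ξ s u : ℝ) : ℝ :=
  u ^ 2 / 2 + s * B1hat ρ ξ u + s ^ 2 * (Nf κ ρ ξ s u / Ff κ ρ ξ s u)
def Af (κ θ ρ ξ s u : ℝ) : ℝ :=
  κ * θ / ξ ^ 2 * (s * (κ * s - ρ * ξ * u) - 2 * Real.log (Ff κ ρ ξ s u))

lemma hest_ident (κ θ ρ ξ s u : ℝ) (hξ : 0 < ξ) (hs : 0 < s) (hq : qf κ ρ ξ s u ≠ 0)
    (hu0 : u ≠ 0) (hus : u ≠ s) (hF : 0 < Ff κ ρ ξ s u) (hx : |xf κ ρ ξ s u| < 1) :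
    hestB κ ρ ξ ((u : ℂ) / (s : ℂ)) (s ^ 2) = (Bf κ ρ ξ s u : ℂ) ∧
    hestA κ θ ρ ξ ((u : ℂ) / (s : ℂ)) (s ^ 2) = (Af κ θ ρ ξ s u : ℂ) := by
  have hsC : (s : ℂ) ≠ 0 := by exact_mod_cast hs.ne'
  have hξC : (ξ : ℂ) ≠ 0 := by exact_mod_cast hξ.ne'
  have huC : (u : ℂ) ≠ 0 := by exact_mod_cast hu0
  have husC : (u : ℂ) - s ≠ 0 := by exact_mod_cast sub_ne_zero.mpr hus
  have hFC : ((Ff κ ρ ξ s u : ℝ) : ℂ) ≠ 0 := by exact_mod_cast hF.ne'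
  set w : ℂ := (u : ℂ) / (s : ℂ) with hw
  set d : ℂ := hestD κ ρ ξ w with hd
  set c : ℂ := (κ : ℂ) - (ρ : ℂ) * (ξ : ℂ) * w with hc
  have hd2 : d ^ 2 = c ^ 2 + w * (1 - w) * (ξ : ℂ) ^ 2 := by
    rw [hd, hestD, ← Complex.cpow_nat_mul]
    simp [hc]
  have hdq : d ^ 2 * (s : ℂ) ^ 2 = (qf κ ρ ξ s u : ℂ) := by
    rw [hd2, hc, hw, qf]
    push_cast
    field_simp
  have hd0 : d ≠ 0 := by
    intro h
    rw [h] at hdq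
    apply hq
    have : (qf κ ρ ξ s u : ℂ) = 0 := by rw [← hdq]; simp
    exact_mod_cast this
  have hW : c ^ 2 - d ^ 2 = (w ^ 2 - w) * (ξ : ℂ) ^ 2 := by rw [hd2]; ring
  have hW0 : (w ^ 2 - w) * (ξ : ℂ) ^ 2 ≠ 0 := by
    have : w ^ 2 - w = u * (u - s) / s ^ 2 := by rw [hw]; field_simp
    rw [this]
    exact mul_ne_zero (div_ne_zero (mul_ne_zero huC husC) (pow_ne_zero _ hsC)) (pow_ne_zero _ hξC)
  have hcd : c + d ≠ 0 := by
    intro h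
    apply hW0
    rw [← hW]
    linear_combination (c - d) * h
  have hz : (d * ((s ^ 2 : ℝ) : ℂ) / 2) ^ 2 = (xf κ ρ ξ s u : ℂ) := by
    rw [xf]
    push_cast
    rw [← hdq]
    ring
  have hcosh := cosh_hsE _ _ hz
  have hsinh := sinh_hsE _ _ hz
  have hFeq : c * Complex.sinh (d * ((s ^ 2 : ℝ) : ℂ) / 2) +
      d * Complex.cosh (d * ((s ^ 2 : ℝ) : ℂ) / 2) = d * (Ff κ ρ ξ s u : ℂ) := by
    rw [hcosh, hsinh, Ff, f2f, g2f, hc, hw]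
    rw [xf]
    push_cast
    field_simp
    ring
  obtain ⟨h1, h2⟩ := riccati_ident c d ((s ^ 2 : ℝ) : ℂ) (w ^ 2 - w) (ξ : ℂ) (Ff κ ρ ξ s u : ℂ)
    hd0 hcd hξC hW hFeq hFC
  constructor
  · rw [hestB, hestGamma, ← hd, ← hc, h2, hsinh]
    have hBf : Bf κ ρ ξ s u * Ff κ ρ ξ s u =
        (u ^ 2 - u * s) / 2 * (1 + xf κ ρ ξ s u * hsE 3 (xf κ ρ ξ s u)) := by
      rw [Bf]
      have : (u ^ 2 / 2 + s * B1hat ρ ξ u + s ^ 2 * (Nf κ ρ ξ s u / Ff κ ρ ξ s u)) * Ff κ ρ ξ s u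
        = (u ^ 2 / 2 + s * B1hat ρ ξ u) * Ff κ ρ ξ s u + s ^ 2 * Nf κ ρ ξ s u := by
        field_simp
      rw [this, Nf, Ff]
      have hx : xf κ ρ ξ s u * hsE 3 (xf κ ρ ξ s u) = s ^ 2 * g2f κ ρ ξ s u := by
        rw [g2f, xf]; ring
      rw [hx, B1hat]
      ring
    have hBC : (Bf κ ρ ξ s u : ℂ) * (Ff κ ρ ξ s u : ℂ) = ((u : ℂ) ^ 2 - u * s) / 2 *
        ((1 + xf κ ρ ξ s u * hsE 3 (xf κ ρ ξ s u) : ℝ) : ℂ) := by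
      rw [← Complex.ofReal_mul, hBf]
      push_cast
      ring
    rw [div_eq_iff (mul_ne_zero hd0 hFC)]
    calc _ = d * (((u : ℂ) ^ 2 - u * s) / 2 *
        ((1 + xf κ ρ ξ s u * hsE 3 (xf κ ρ ξ s u) : ℝ) : ℂ)) := by
            rw [hw]; push_cast; field_simp
      _ = _ := by rw [← hBC]; ring
  · rw [hestA, hestGamma, ← hd, ← hc, h1]
    have hnorm : ‖d * ((s ^ 2 : ℝ) : ℂ) / 2‖ < 1 := by
      have : ‖d * ((s ^ 2 : ℝ) : ℂ) / 2‖ ^ 2 < 1 := by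
        rw [← norm_pow, hz, Complex.norm_real]; exact hx
      nlinarith [norm_nonneg (d * ((s ^ 2 : ℝ) : ℂ) / 2)]
    have him : |(d * ((s ^ 2 : ℝ) : ℂ) / 2).im| < 1 := (Complex.abs_im_le_norm _).trans_lt hnorm
    have hpi := Real.pi_gt_three
    have hlog : Complex.log (Complex.exp (-(d * ((s ^ 2 : ℝ) : ℂ) / 2)) * (Ff κ ρ ξ s u : ℂ)) =
        -(d * ((s ^ 2 : ℝ) : ℂ) / 2) + (Real.log (Ff κ ρ ξ s u) : ℂ) := by
      have hE : (Ff κ ρ ξ s u : ℂ) = Complex.exp (Real.log (Ff κ ρ ξ s u) : ℂ) := by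
        rw [← Complex.ofReal_exp, Real.exp_log hF]
      nth_rewrite 1 [hE]
      rw [← Complex.exp_add, Complex.log_exp]
      · rw [Complex.add_im, Complex.neg_im, Complex.ofReal_im]
        linarith [(abs_lt.mp him).2]
      · rw [Complex.add_im, Complex.neg_im, Complex.ofReal_im]
        linarith [(abs_lt.mp him).1]
    rw [hlog, Af, hc, hw]
    push_cast
    field_simp
    ring

def pf (κ ρ ξ s u : ℝ) : ℝ := -(ρ * ξ * u / 2) + s * f2f κ ρ ξ s u

lemma Ff_eq (κ ρ ξ s u : ℝ) : Ff κ ρ ξ s u = 1 + s * pf κ ρ ξ s u := by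
  rw [Ff, pf]; ring

lemma qf_cd (κ ρ ξ : ℝ) : ContDiff ℝ 1 (fun p : ℝ × ℝ => qf κ ρ ξ p.1 p.2) := by
  unfold qf; fun_prop
lemma xf_cd (κ ρ ξ : ℝ) : ContDiff ℝ 1 (fun p : ℝ × ℝ => xf κ ρ ξ p.1 p.2) := by
  have := qf_cd κ ρ ξ
  unfold xf; fun_prop
lemma g2f_cd (κ ρ ξ : ℝ) : ContDiff ℝ 1 (fun p : ℝ × ℝ => g2f κ ρ ξ p.1 p.2) := by
  have := qf_cd κ ρ ξ
  have h3 := (hsE_contDiff 3 (n := 1)).comp (xf_cd κ ρ ξ)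
  unfold Function.comp at h3
  unfold g2f; fun_prop
lemma f2f_cd (κ ρ ξ : ℝ) : ContDiff ℝ 1 (fun p : ℝ × ℝ => f2f κ ρ ξ p.1 p.2) := by
  have := qf_cd κ ρ ξ
  have h2 := (hsE_contDiff 2 (n := 1)).comp (xf_cd κ ρ ξ)
  have := g2f_cd κ ρ ξ
  unfold Function.comp at h2
  unfold f2f; fun_prop
lemma pf_cd (κ ρ ξ : ℝ) : ContDiff ℝ 1 (fun p : ℝ × ℝ => pf κ ρ ξ p.1 p.2) := by
  have := f2f_cd κ ρ ξ
  unfold pf; fun_prop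
lemma Nf_cd (κ ρ ξ : ℝ) : ContDiff ℝ 1 (fun p : ℝ × ℝ => Nf κ ρ ξ p.1 p.2) := by
  have := f2f_cd κ ρ ξ
  have := g2f_cd κ ρ ξ
  unfold Nf B1hat; fun_prop

lemma B1hat_deriv (ρ ξ u : ℝ) : HasDerivAt (B1hat ρ ξ) (B1hat' ρ ξ u) u := by
  have h1 : HasDerivAt (fun u : ℝ => ρ * ξ / 4 * u ^ 3 - 1 / 2 * u)
      (ρ * ξ / 4 * ((3 : ℕ) * u ^ 2) - 1 / 2 * 1) u := by
    have := hasDerivAt_pow 3 u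
    exact (this.const_mul _).sub ((hasDerivAt_id u).const_mul _)
  have h2 : B1hat ρ ξ = fun u : ℝ => ρ * ξ / 4 * u ^ 3 - 1 / 2 * u := by
    ext u; rw [B1hat]; ring
  rw [h2]
  convert h1 using 1
  rw [B1hat']; push_cast; ring

lemma nonjunk (κ ρ ξ s u : ℝ) (hκ : 0 < κ) (hs : 0 < s) :
    ∀ᶠ u' in 𝓝[≠] u, qf κ ρ ξ s u' ≠ 0 ∧ u' ≠ 0 ∧ u' ≠ s := by
  have hfin : {u' : ℝ | qf κ ρ ξ s u' = 0 ∨ u' = 0 ∨ u' = s}.Finite := by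
    have h1 : {u' : ℝ | qf κ ρ ξ s u' = 0}.Finite := by
      let P : Polynomial ℝ := (Polynomial.C (κ * s) - Polynomial.C (ρ * ξ) * Polynomial.X) ^ 2 +
        (Polynomial.X * Polynomial.C s - Polynomial.X ^ 2) * Polynomial.C (ξ ^ 2)
      have hev : ∀ x, P.eval x = qf κ ρ ξ s x := by
        intro x; simp only [P, qf, Polynomial.eval_add, Polynomial.eval_mul, Polynomial.eval_sub,
          Polynomial.eval_pow, Polynomial.eval_C, Polynomial.eval_X]
      have hP : P ≠ 0 := by
        intro h
        have h0 := hev 0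
        rw [h, qf] at h0
        have h1 : 0 < κ * s := by positivity
        rw [Polynomial.eval_zero] at h0
        nlinarith
      refine (P.roots.toFinset.finite_toSet).subset ?_
      intro x hx
      simp only [Finset.mem_coe, Multiset.mem_toFinset, Polynomial.mem_roots hP, Polynomial.IsRoot]
      rw [hev]; exact hx
    have h2 : {u' : ℝ | qf κ ρ ξ s u' = 0 ∨ u' = 0 ∨ u' = s} =
      {u' : ℝ | qf κ ρ ξ s u' = 0} ∪ ({0} ∪ {s}) := by ext x; simp; tauto
    rw [h2]
    exact h1.union ((Set.finite_singleton 0).union (Set.finite_singleton s))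
  have h3 : ({u' : ℝ | qf κ ρ ξ s u' = 0 ∨ u' = 0 ∨ u' = s} \ {u})ᶜ ∈ 𝓝 u :=
    (hfin.subset Set.sdiff_subset).isClosed.isOpen_compl.mem_nhds (by simp)
  filter_upwards [mem_nhdsWithin_of_mem_nhds h3, self_mem_nhdsWithin] with x hx hxu
  simp only [Set.mem_compl_iff, Set.mem_sdiff, Set.mem_ofPred_eq, Set.mem_singleton_iff, not_and,
    not_not] at hx hxu
  refine ⟨fun h => hxu (hx (Or.inl h)), fun h => hxu (hx (Or.inr (Or.inl h))),
    fun h => hxu (hx (Or.inr (Or.inr h)))⟩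

lemma core (κ θ ρ ξ R : ℝ) (hκ : 0 < κ) (hθ : 0 < θ) (hξ : 0 < ξ) :
    ∃ C s0 : ℝ, 0 < C ∧ 0 < s0 ∧ ∀ s u : ℝ, 0 < s → s < s0 → |u| ≤ R →
      |Bf κ ρ ξ s u - u ^ 2 / 2 - s * B1hat ρ ξ u| ≤ C * s ^ 2 ∧
      (∃ bu, HasDerivAt (Bf κ ρ ξ s) bu u ∧ |bu - u - s * B1hat' ρ ξ u| ≤ C * s ^ 2) ∧
      (∃ au, HasDerivAt (Af κ θ ρ ξ s) au u ∧ |au| ≤ C * s) ∧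
      ∀ᶠ u' : ℝ in 𝓝[≠] u,
        hestB κ ρ ξ ((u' : ℂ) / (s : ℂ)) (s ^ 2) = (Bf κ ρ ξ s u' : ℂ) ∧
        hestA κ θ ρ ξ ((u' : ℂ) / (s : ℂ)) (s ^ 2) = (Af κ θ ρ ξ s u' : ℂ) := by
  obtain ⟨C1, hC1, hq⟩ := contDiff_bound _ (qf_cd κ ρ ξ) (R + 1)
  obtain ⟨C2, hC2, hp⟩ := contDiff_bound _ (pf_cd κ ρ ξ) (R + 1)
  obtain ⟨C3, hC3, hN⟩ := contDiff_bound _ (Nf_cd κ ρ ξ) (R + 1)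
  set a := κ * θ / ξ ^ 2 with ha
  have ha0 : 0 < a := by positivity
  set M := |ρ * ξ| with hM
  have hM0 : 0 ≤ M := abs_nonneg _
  refine ⟨2 * C3 + 4 * (C3 * (1 + C2) + C3 * C2) + a * (M + 4 * C2),
    min 1 (min (1 / (2 * C2)) (1 / C1)), by positivity, by positivity, ?_⟩
  intro s u hs hss hu
  have hs1 : s < 1 := hss.trans_le (min_le_left _ _)
  have hs2 : s * C2 < 1 / 2 := by
    have : s < 1 / (2 * C2) := hss.trans_le ((min_le_right _ _).trans (min_le_left _ _))
    rw [lt_div_iff₀ (by positivity)] at this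
    linarith
  have hs3 : s * C1 < 1 := by
    have : s < 1 / C1 := hss.trans_le ((min_le_right _ _).trans (min_le_right _ _))
    rwa [lt_div_iff₀ (by positivity)] at this
  have hsa : |s| ≤ 1 := by rw [abs_of_pos hs]; exact hs1.le
  have hFpos : ∀ u', |u'| ≤ R + 1 → 1 / 2 ≤ Ff κ ρ ξ s u' ∧ Ff κ ρ ξ s u' ≤ 1 + C2 := by
    intro u' hu'
    have h := abs_le.mp (hp s u' hsa hu').1
    rw [Ff_eq]
    constructor <;> nlinarith
  have huR : |u| ≤ R + 1 := by linarith
  obtain ⟨hF1, hF2⟩ := hFpos u huR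
  have hF0 : 0 < Ff κ ρ ξ s u := by linarith
  obtain ⟨hpb, p', hp', hp'b⟩ := hp s u hsa huR
  obtain ⟨hNb, N', hN', hN'b⟩ := hN s u hsa huR
  have hFd : HasDerivAt (Ff κ ρ ξ s) (s * p') u := by
    have : Ff κ ρ ξ s = fun u => 1 + s * pf κ ρ ξ s u := by ext u; exact Ff_eq ..
    rw [this]
    exact (hp'.const_mul s).const_add 1
  have hinv : (Ff κ ρ ξ s u)⁻¹ ≤ 2 := by
    rw [inv_le_comm₀ hF0 (by norm_num)]; linarith
  have hinv0 : 0 < (Ff κ ρ ξ s u)⁻¹ := by positivity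
  have hsp : |s * p'| ≤ C2 := by
    rw [abs_mul, abs_of_pos hs]; nlinarith [abs_nonneg p']
  refine ⟨?_, ⟨u + s * B1hat' ρ ξ u + s ^ 2 * ((N' * Ff κ ρ ξ s u - Nf κ ρ ξ s u * (s * p')) /
        Ff κ ρ ξ s u ^ 2), ?_, ?_⟩,
    ⟨a * (s * -(ρ * ξ * 1) - 2 * (s * p' / Ff κ ρ ξ s u)), ?_, ?_⟩, ?_⟩
  · have : Bf κ ρ ξ s u - u ^ 2 / 2 - s * B1hat ρ ξ u = Nf κ ρ ξ s u * (Ff κ ρ ξ s u)⁻¹ * s ^ 2 := by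
      rw [Bf]; ring
    rw [this, abs_mul, abs_of_pos (by positivity : 0 < s ^ 2)]
    gcongr
    rw [abs_mul, abs_of_pos hinv0]
    have : |Nf κ ρ ξ s u| * (Ff κ ρ ξ s u)⁻¹ ≤ C3 * 2 := by gcongr
    have : 0 < 4 * (C3 * (1 + C2) + C3 * C2) + a * (M + 4 * C2) := by positivity
    linarith
  · have h1 : HasDerivAt (fun u : ℝ => u ^ 2 / 2) u u := by
      refine ((hasDerivAt_pow 2 u).div_const 2).congr_deriv ?_
      push_cast
      ring
    exact (h1.add ((B1hat_deriv ρ ξ u).const_mul s)).add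
      ((hN'.div hFd hF0.ne').const_mul (s ^ 2))
  · have : u + s * B1hat' ρ ξ u + s ^ 2 * ((N' * Ff κ ρ ξ s u - Nf κ ρ ξ s u * (s * p')) /
        Ff κ ρ ξ s u ^ 2) - u - s * B1hat' ρ ξ u =
        ((N' * Ff κ ρ ξ s u - Nf κ ρ ξ s u * (s * p')) * ((Ff κ ρ ξ s u)⁻¹) ^ 2) * s ^ 2 := by
      field_simp
      ring
    rw [this, abs_mul, abs_of_pos (by positivity : 0 < s ^ 2)]
    gcongr
    rw [abs_mul, abs_of_pos (by positivity : 0 < ((Ff κ ρ ξ s u)⁻¹) ^ 2)]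
    have h1 : |N' * Ff κ ρ ξ s u - Nf κ ρ ξ s u * (s * p')| ≤ C3 * (1 + C2) + C3 * C2 := by
      refine (abs_sub _ _).trans ?_
      rw [abs_mul, abs_mul (Nf κ ρ ξ s u), abs_of_pos hF0]
      gcongr
    have h2 : ((Ff κ ρ ξ s u)⁻¹) ^ 2 ≤ 2 ^ 2 := by gcongr
    have h3 := mul_le_mul h1 h2 (by positivity) (by positivity)
    have : 0 < 2 * C3 + a * (M + 4 * C2) := by positivity
    linarith
  · have h1 : HasDerivAt (fun u : ℝ => s * (κ * s - ρ * ξ * u)) (s * (-(ρ * ξ * 1))) u :=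
      (((hasDerivAt_id u).const_mul (ρ * ξ)).const_sub (κ * s)).const_mul s
    exact (h1.sub ((hFd.log hF0.ne').const_mul 2)).const_mul a
  · have : a * (s * -(ρ * ξ * 1) - 2 * (s * p' / Ff κ ρ ξ s u)) =
      (a * (-(ρ * ξ) - 2 * (p' * (Ff κ ρ ξ s u)⁻¹))) * s := by
      field_simp
    rw [this, abs_mul, abs_of_pos hs]
    gcongr
    rw [abs_mul, abs_of_pos ha0]
    have h1 : |-(ρ * ξ) - 2 * (p' * (Ff κ ρ ξ s u)⁻¹)| ≤ M + 4 * C2 := by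
      refine (abs_sub _ _).trans ?_
      rw [abs_neg, abs_mul 2, abs_mul p', abs_of_pos hinv0, abs_of_pos (by norm_num : (0 : ℝ) < 2)]
      have : |p'| * (Ff κ ρ ξ s u)⁻¹ ≤ C2 * 2 := by gcongr
      linarith
    have h2 := mul_le_mul_of_nonneg_left h1 ha0.le
    have : 0 < 2 * C3 + 4 * (C3 * (1 + C2) + C3 * C2) := by positivity
    linarith
  · have hnear : ∀ᶠ u' in 𝓝[≠] u, |u'| ≤ R + 1 := by
      apply mem_nhdsWithin_of_mem_nhds
      have : ∀ᶠ u' in 𝓝 u, |u'| < R + 1 :=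
        continuous_abs.continuousAt.eventually_lt continuousAt_const (by linarith)
      exact this.mono fun _ h => h.le
    filter_upwards [hnear, nonjunk κ ρ ξ s u hκ hs] with u' h1 h2
    refine hest_ident κ θ ρ ξ s u' hξ hs h2.1 h2.2.1 h2.2.2 ?_ ?_
    · linarith [(hFpos u' h1).1]
    · have := (hq s u' hsa h1).1
      rw [xf, abs_div, abs_mul, abs_of_pos (by positivity : 0 < s ^ 2),
        abs_of_pos (by norm_num : (0 : ℝ) < 4)]
      have h3 : s ^ 2 * |qf κ ρ ξ s u'| ≤ s ^ 2 * C1 := by gcongr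
      have h4 : s ^ 2 * C1 ≤ 1 := by nlinarith
      linarith

lemma hestLambda_eq (κ θ ξ v ρ t s u : ℝ) (hs : 0 < s)
    (hB : hestB κ ρ ξ ((u : ℂ) / (s : ℂ)) (s ^ 2) = (Bf κ ρ ξ s u : ℂ))
    (hA : hestA κ θ ρ ξ ((u : ℂ) / (s : ℂ)) (s ^ 2) = (Af κ θ ρ ξ s u : ℂ)) :
    hestLambda κ θ ξ v ρ t (s ^ 2) u =
      ((s * (Af κ θ ρ ξ s u + Bf κ ρ ξ s u * v * Real.exp (-(κ * t)) /
        (1 - 2 * betaT κ ξ t * Bf κ ρ ξ s u)) : ℝ) : ℂ) -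
      ((s * (2 * κ * θ / ξ ^ 2) : ℝ) : ℂ) *
        Complex.log ((1 - 2 * betaT κ ξ t * Bf κ ρ ξ s u : ℝ) : ℂ) := by
  rw [hestLambda, hestLambdaC, Real.sqrt_sq hs.le, hestG, hB, hA]
  push_cast
  ring

lemma eventually_small (D c : ℝ) (hc : 0 < c) : ∀ᶠ s : ℝ in 𝓝[>] 0, s * D < c := by
  have h : Tendsto (fun s : ℝ => s * D) (𝓝[>] 0) (𝓝 0) := by
    have : Tendsto (fun s : ℝ => s * D) (𝓝 0) (𝓝 (0 * D)) :=
      (continuous_id.mul continuous_const).tendsto 0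
    rw [zero_mul] at this
    exact this.mono_left nhdsWithin_le_nhds
  exact h.eventually_lt_const hc

lemma saddle (κ θ ξ v ρ t : ℝ) (hκ : 0 < κ) (hθ : 0 < θ) (hξ : 0 < ξ)
    (hβ : 0 < betaT κ ξ t) (k : ℝ) (hk : k ≠ 0) :
    ∃ C R : ℝ, ∀ᶠ s in 𝓝[>] (0 : ℝ), ∀ u ∈ hestDom κ θ ξ v ρ t (s ^ 2),
      deriv (hestLambda κ θ ξ v ρ t (s ^ 2)) u = (k : ℂ) →
      |u| ≤ R ∧ ∃ φ bu au : ℝ, 0 < φ ∧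
        |φ - (1 - betaT κ ξ t * u ^ 2 - 2 * betaT κ ξ t * s * B1hat ρ ξ u)| ≤ C * s ^ 2 ∧
        |bu - u - s * B1hat' ρ ξ u| ≤ C * s ^ 2 ∧ |au| ≤ C * s ∧
        s * (au * φ ^ 2 + v * Real.exp (-(κ * t)) * bu +
          4 * κ * θ * betaT κ ξ t / ξ ^ 2 * bu * φ) = k * φ ^ 2 := by
  set β := betaT κ ξ t with hβdef
  set R := 2 / Real.sqrt β with hR
  have hsβ : 0 < Real.sqrt β := Real.sqrt_pos.mpr hβ
  have hR0 : 0 < R := by positivity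
  have hβR : β * R ^ 2 = 4 := by
    rw [hR, div_pow, Real.sq_sqrt hβ.le]; field_simp; norm_num
  obtain ⟨C, s0, hC, hs0, hcore⟩ := core κ θ ρ ξ R hκ hθ hξ
  -- crude bounds
  obtain ⟨Q, hQ0, hQ⟩ : ∃ Q : ℝ, 0 < Q ∧ ∀ u, |u| ≤ R → |B1hat ρ ξ u| ≤ Q ∧ |B1hat' ρ ξ u| ≤ Q := by
    obtain ⟨Q1, hQ1, h1⟩ := contDiff_bound (fun _ u => B1hat ρ ξ u) (by unfold B1hat; fun_prop) R
    obtain ⟨Q2, hQ2, h2⟩ := contDiff_bound (fun _ u => B1hat' ρ ξ u) (by unfold B1hat'; fun_prop) R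
    exact ⟨Q1 + Q2, by positivity, fun u hu => ⟨by linarith [(h1 0 u (by simp) hu).1],
      by linarith [(h2 0 u (by simp) hu).1]⟩⟩
  have hs0' : ∀ᶠ s : ℝ in 𝓝[>] 0, s < s0 := by
    have := eventually_small 1 s0 hs0
    simpa using this
  have hs1' : ∀ᶠ s : ℝ in 𝓝[>] 0, s < 1 := by
    have := eventually_small 1 1 one_pos
    simpa using this
  refine ⟨max C (2 * β * C), R, ?_⟩
  filter_upwards [self_mem_nhdsWithin, hs0', hs1', eventually_small (2 * β * (Q + C)) (1 / 2)
    (by norm_num), eventually_small (β * (Q + C) ^ 2) (1 / 2) (by norm_num)]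
    with s hs hss0 hss1 hsm1 hsm2 u hu hderiv
  have hs : 0 < s := hs
  have hss : s ^ 2 ≤ s := by nlinarith
  set Φ : ℝ → ℝ := fun u => 1 - 2 * β * Bf κ ρ ξ s u with hΦ
  -- crude estimates
  have hΦest : ∀ u, |u| ≤ R → |Φ u - (1 - β * u ^ 2)| < 1 / 2 := by
    intro u hu
    have h1 := (hcore s u hs hss0 hu).1
    have h2 := (hQ u hu).1
    have h3 : Φ u - (1 - β * u ^ 2) = -2 * β * ((Bf κ ρ ξ s u - u ^ 2 / 2 - s * B1hat ρ ξ u) +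
      s * B1hat ρ ξ u) := by rw [hΦ]; ring
    rw [h3, abs_mul]
    have h4 : |(Bf κ ρ ξ s u - u ^ 2 / 2 - s * B1hat ρ ξ u) + s * B1hat ρ ξ u| ≤ s * (Q + C) := by
      refine (abs_add_le _ _).trans ?_
      rw [abs_mul, abs_of_pos hs]
      have : s * |B1hat ρ ξ u| ≤ s * Q := by gcongr
      nlinarith
    have h5 : |-2 * β| = 2 * β := by
      rw [abs_of_neg (by linarith)]; ring
    rw [h5]
    calc 2 * β * _ ≤ 2 * β * (s * (Q + C)) := by gcongr
      _ = s * (2 * β * (Q + C)) := by ring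
      _ < _ := hsm1
  have hinside : ∀ u, |u| ≤ R →
      u ∈ interior {u : ℝ | (hestLambda κ θ ξ v ρ t (s ^ 2) u).im = 0} →
      0 ≤ Φ u ∧ ∀ᶠ u' in 𝓝 u, 0 ≤ Φ u' := by
    intro u hu hui
    obtain ⟨-, ⟨bu, hbu, -⟩, -, hid⟩ := hcore s u hs hss0 hu
    have hmem : ∀ᶠ u' in 𝓝[≠] u, (hestLambda κ θ ξ v ρ t (s ^ 2) u').im = 0 :=
      mem_nhdsWithin_of_mem_nhds (mem_interior_iff_mem_nhds.mp hui)
    have hpos : ∀ᶠ u' in 𝓝[≠] u, 0 ≤ Φ u' := by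
      filter_upwards [hid, hmem] with u' h1 h2
      by_contra hneg
      push Not at hneg
      rw [hestLambda_eq κ θ ξ v ρ t s u' hs h1.1 h1.2, Complex.sub_im, Complex.ofReal_im,
        Complex.im_ofReal_mul, Complex.log_im, Complex.arg_ofReal_of_neg hneg] at h2
      have : 0 < s * (2 * κ * θ / ξ ^ 2) * Real.pi := by positivity
      linarith
    have hcont : ContinuousAt Φ u := by
      have := hbu.continuousAt
      exact continuousAt_const.sub (continuousAt_const.mul this)
    have h0 : 0 ≤ Φ u := ge_of_tendsto (hcont.tendsto.mono_left nhdsWithin_le_nhds) hpos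
    refine ⟨h0, ?_⟩
    rw [eventually_nhdsWithin_iff] at hpos
    filter_upwards [hpos] with u' h
    by_cases hu' : u' = u
    · rw [hu']; exact h0
    · exact h hu'
  have hsub := connectedComponentIn_subset
    (interior {u : ℝ | (hestLambda κ θ ξ v ρ t (s ^ 2) u).im = 0}) 0
  have h0mem : (0 : ℝ) ∈ hestDom κ θ ξ v ρ t (s ^ 2) := by
    unfold hestDom at hu ⊢
    by_cases h : (0 : ℝ) ∈ interior {u : ℝ | (hestLambda κ θ ξ v ρ t (s ^ 2) u).im = 0}
    · exact mem_connectedComponentIn h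
    · rw [connectedComponentIn_eq_empty h] at hu
      exact hu.elim
  have hpre : (hestDom κ θ ξ v ρ t (s ^ 2)).OrdConnected :=
    isPreconnected_connectedComponentIn.ordConnected
  have huR : |u| ≤ R := by
    by_contra hcon
    push Not at hcon
    have hcase : R ∈ hestDom κ θ ξ v ρ t (s ^ 2) ∨ -R ∈ hestDom κ θ ξ v ρ t (s ^ 2) := by
      rcases lt_abs.mp hcon with h | h
      · exact Or.inl (hpre.out h0mem hu ⟨hR0.le, h.le⟩)
      · exact Or.inr (hpre.out hu h0mem ⟨by linarith, by linarith⟩)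
    rcases hcase with h | h
    · have h1 := (hinside R (by rw [abs_of_pos hR0]) (hsub h)).1
      have h2 := (abs_lt.mp (hΦest R (by rw [abs_of_pos hR0]))).2
      linarith
    · have h1 := (hinside (-R) (by rw [abs_neg, abs_of_pos hR0]) (hsub h)).1
      have h2 := (abs_lt.mp (hΦest (-R) (by rw [abs_neg, abs_of_pos hR0]))).2
      rw [neg_sq] at h2
      linarith
  refine ⟨huR, ?_⟩
  obtain ⟨hBest, ⟨bu, hbu, hbest⟩, ⟨au, hau, haest⟩, hid⟩ := hcore s u hs hss0 huR
  have hΦd : HasDerivAt Φ (-(2 * β * bu)) u := (hbu.const_mul (2 * β)).const_sub 1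
  have hΦpos : 0 < Φ u := by
    obtain ⟨h0, hev⟩ := hinside u huR (hsub hu)
    rcases h0.lt_or_eq with h | h
    · exact h
    exfalso
    have hmin : IsLocalMin Φ u := by
      filter_upwards [hev] with u' h'
      rw [← h]; exact h'
    have h1 := hmin.hasDerivAt_eq_zero hΦd
    have hb0 : bu = 0 := by
      have : 2 * β * bu = 0 := by linarith
      rcases mul_eq_zero.mp this with h | h
      · linarith
      · exact h
    have h2 := hΦest u huR
    rw [← h] at h2
    have h3 : 1 / 2 < β * u ^ 2 := by
      have := (abs_lt.mp h2).1
      linarith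
    have h4 : |u| ≤ s * (Q + C) := by
      have h5 : u = -((bu - u - s * B1hat' ρ ξ u) + s * B1hat' ρ ξ u) := by rw [hb0]; ring
      rw [h5, abs_neg]
      refine (abs_add_le _ _).trans ?_
      rw [abs_mul, abs_of_pos hs]
      have : s * |B1hat' ρ ξ u| ≤ s * Q := mul_le_mul_of_nonneg_left (hQ u huR).2 hs.le
      nlinarith
    have h5 : u ^ 2 ≤ (s * (Q + C)) ^ 2 := by
      rw [← sq_abs]; gcongr
    have h6 : β * u ^ 2 ≤ s * (β * (Q + C) ^ 2) := by
      calc β * u ^ 2 ≤ β * (s * (Q + C)) ^ 2 := by gcongr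
        _ = s ^ 2 * (β * (Q + C) ^ 2) := by ring
        _ ≤ s * (β * (Q + C) ^ 2) := by gcongr
    linarith
  -- the real function
  set E := v * Real.exp (-(κ * t)) with hE
  set L : ℝ → ℝ := fun u => s * (Af κ θ ρ ξ s u + E * (Bf κ ρ ξ s u / Φ u) -
    2 * κ * θ / ξ ^ 2 * Real.log (Φ u)) with hL
  have hLd : HasDerivAt L (s * (au + E * ((bu * Φ u - Bf κ ρ ξ s u * (-(2 * β * bu))) / Φ u ^ 2) -
    2 * κ * θ / ξ ^ 2 * (-(2 * β * bu) / Φ u))) u :=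
    ((hau.add ((hbu.div hΦd hΦpos.ne').const_mul E)).sub
      ((hΦd.log hΦpos.ne').const_mul _)).const_mul s
  have hev : ∀ᶠ u' in 𝓝[≠] u, hestLambda κ θ ξ v ρ t (s ^ 2) u' = (L u' : ℂ) := by
    have hp : ∀ᶠ u' in 𝓝[≠] u, 0 < Φ u' :=
      mem_nhdsWithin_of_mem_nhds (hΦd.continuousAt.eventually_const_lt hΦpos)
    filter_upwards [hid, hp] with u' h1 h2
    rw [hestLambda_eq κ θ ξ v ρ t s u' hs h1.1 h1.2, ← Complex.ofReal_log (le_of_lt h2),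
      ← Complex.ofReal_mul, ← Complex.ofReal_sub, hL]
    congr 1
    simp only [hΦ, hE]
    ring
  have hdiff : DifferentiableAt ℝ (hestLambda κ θ ξ v ρ t (s ^ 2)) u := by
    by_contra h
    rw [deriv_zero_of_not_differentiableAt h] at hderiv
    exact hk (by exact_mod_cast hderiv.symm)
  have hLC := hLd.ofReal_comp
  have hequ : hestLambda κ θ ξ v ρ t (s ^ 2) u = (L u : ℂ) := by
    have h1 := hdiff.continuousAt.tendsto.mono_left (nhdsWithin_le_nhds (s := {u}ᶜ))
    have h2 := hLC.continuousAt.tendsto.mono_left (nhdsWithin_le_nhds (s := {u}ᶜ))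
    exact tendsto_nhds_unique (h1.congr' hev) h2
  have hev2 : hestLambda κ θ ξ v ρ t (s ^ 2) =ᶠ[𝓝 u] fun u' => (L u' : ℂ) := by
    rw [eventually_nhdsWithin_iff] at hev
    filter_upwards [hev] with u' h
    by_cases hu' : u' = u
    · rw [hu']; exact hequ
    · exact h hu'
  rw [hev2.deriv_eq, hLC.deriv] at hderiv
  have hkey := Complex.ofReal_injective hderiv
  refine ⟨Φ u, bu, au, hΦpos, ?_, ?_, ?_, ?_⟩
  · have h3 : Φ u - (1 - β * u ^ 2 - 2 * β * s * B1hat ρ ξ u) =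
      -2 * β * (Bf κ ρ ξ s u - u ^ 2 / 2 - s * B1hat ρ ξ u) := by rw [hΦ]; ring
    have h5 : |-2 * β| = 2 * β := by
      rw [abs_of_neg (by linarith)]; ring
    rw [h3, abs_mul, h5]
    calc 2 * β * _ ≤ 2 * β * (C * s ^ 2) := by gcongr
      _ = (2 * β * C) * s ^ 2 := by ring
      _ ≤ _ := by gcongr; exact le_max_right _ _
  · refine hbest.trans ?_
    gcongr; exact le_max_left _ _
  · refine haest.trans ?_
    gcongr; exact le_max_left _ _
  · rw [← hkey]
    have h1 : bu * Φ u - Bf κ ρ ξ s u * (-(2 * β * bu)) = bu := by rw [hΦ]; ring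
    rw [h1]
    field_simp
    ring

/-- eventually bounded real functions. -/
def Bd {α : Type*} (l : Filter α) (f : α → ℝ) : Prop := f =O[l] (fun _ => (1 : ℝ))

namespace Bd
variable {α : Type*} {l : Filter α} {f g : α → ℝ}
lemma const (c : ℝ) : Bd l (fun _ => c) := isBigO_const_const c one_ne_zero l
lemma add (hf : Bd l f) (hg : Bd l g) : Bd l (fun x => f x + g x) := IsBigO.add hf hg
lemma sub (hf : Bd l f) (hg : Bd l g) : Bd l (fun x => f x - g x) := IsBigO.sub hf hg
lemma neg (hf : Bd l f) : Bd l (fun x => - f x) := IsBigO.neg_left hf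
lemma mul (hf : Bd l f) (hg : Bd l g) : Bd l (fun x => f x * g x) := by
  have := IsBigO.mul hf hg
  simpa [Bd] using this
lemma pow (hf : Bd l f) (n : ℕ) : Bd l (fun x => f x ^ n) := by
  have := IsBigO.pow hf n
  simpa [Bd] using this
lemma div_const (hf : Bd l f) (c : ℝ) : Bd l (fun x => f x / c) := by
  have := hf.mul (const (l := l) c⁻¹)
  simpa [div_eq_mul_inv] using this
lemma b1 (ρ ξ : ℝ) (hf : Bd l f) : Bd l (fun x => B1hat ρ ξ (f x)) := by
  unfold B1hat
  exact (hf.div_const 4).mul ((((hf.pow 2).mul (const ρ)).mul (const ξ)).sub (const 2))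
lemma b1' (ρ ξ : ℝ) (hf : Bd l f) : Bd l (fun x => B1hat' ρ ξ (f x)) := by
  unfold B1hat'
  exact (((((const 3).mul (hf.pow 2)).mul (const ρ)).mul (const ξ)).sub (const 2)).div_const 4
lemma congr' (hf : Bd l f) (h : ∀ᶠ x in l, g x = f x) : Bd l g :=
  IsBigO.congr' hf (h.mono fun _ h => h.symm) EventuallyEq.rfl
lemma of_le (M : ℝ) (h : ∀ᶠ x in l, |f x| ≤ M) : Bd l f :=
  IsBigO.of_bound M (h.mono fun x hx => by simpa using hx)
lemma le (hf : Bd l f) : ∃ M : ℝ, 0 < M ∧ ∀ᶠ x in l, |f x| ≤ M := by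
  obtain ⟨M, hM, h⟩ := IsBigO.exists_pos hf
  exact ⟨M, hM, h.bound.mono fun x hx => by simpa using hx⟩
lemma of_bigO {r : α → ℝ} {n : ℕ} (hf : f =O[l] (fun x => r x ^ n)) (hr : ∀ᶠ x in l, 0 < r x) :
    ∃ e : α → ℝ, Bd l e ∧ ∀ᶠ x in l, f x = r x ^ n * e x := by
  refine ⟨fun x => f x / r x ^ n, ?_, ?_⟩
  · obtain ⟨M, h⟩ := hf.bound
    refine of_le M ?_
    filter_upwards [h, hr] with x h1 h2
    have h3 : 0 < r x ^ n := by positivity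
    rw [abs_div, div_le_iff₀ (abs_pos.mpr h3.ne')]
    exact h1
  · filter_upwards [hr] with x h
    have h3 : 0 < r x ^ n := by positivity
    field_simp
lemma mul_tendsto {r : α → ℝ} (hf : Bd l f) (hr : Tendsto r l (𝓝 0)) :
    Tendsto (fun x => r x * f x) l (𝓝 0) := by
  have h1 : (fun x => r x * f x) =O[l] (fun x => r x * 1) := (isBigO_refl r l).mul hf
  simp only [mul_one] at h1
  exact h1.trans_tendsto hr
end Bd

set_option maxHeartbeats 4000000 in
lemma asym {α : Type*} (l : Filter α) (β E m k a0 a1 a2 a3 ρ ξ y1 y2 : ℝ)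
    (hβ : 0 < β) (hE : 0 < E) (hk : k ≠ 0) (ha0 : β * a0 ^ 2 = 1) (hka : 0 < k * a0)
    (y0 : ℝ) (hy0 : 0 < y0)
    (hy0e : y0 = -2 * β * a0 * a1)
    (hy1 : y1 = -2 * β * a0 * a2 - β * a1 ^ 2 - 2 * β * B1hat ρ ξ a0)
    (hy2 : y2 = -2 * β * a0 * a3 - 2 * β * a1 * a2 - 2 * β * a1 * B1hat' ρ ξ a0)
    (c0 : k * y0 ^ 2 = E * a0)
    (c1 : 2 * k * y0 * y1 = E * a1 + m * y0 * a0)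
    (c2 : k * (y1 ^ 2 + 2 * y0 * y2) = E * (a2 + B1hat' ρ ξ a0) + m * (y0 * a1 + y1 * a0))
    (r u φ bu au : α → ℝ) (hr : Tendsto r l (𝓝[>] 0)) (hu : Bd l u)
    (hφ : (fun x => φ x - (1 - β * u x ^ 2 - 2 * β * r x ^ 2 * B1hat ρ ξ (u x))) =O[l]
      fun x => r x ^ 4)
    (hbu : (fun x => bu x - u x - r x ^ 2 * B1hat' ρ ξ (u x)) =O[l] fun x => r x ^ 4)
    (hau : au =O[l] fun x => r x ^ 2) (hpos : ∀ᶠ x in l, 0 < φ x)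
    (heq : ∀ᶠ x in l, r x ^ 2 * (au x * φ x ^ 2 + E * bu x + m * bu x * φ x) = k * φ x ^ 2) :
    (fun x => u x - (a0 + a1 * r x + a2 * r x ^ 2 + a3 * r x ^ 3)) =O[l] fun x => r x ^ 4 := by
  have hrpos : ∀ᶠ x in l, 0 < r x := hr.eventually self_mem_nhdsWithin
  have hr0 : Tendsto r l (𝓝 0) := hr.mono_right nhdsWithin_le_nhds
  have hrB : Bd l r := hr0.isBigO_one ℝ
  obtain ⟨e1, he1B, he1⟩ := Bd.of_bigO hφ hrpos
  obtain ⟨e2, he2B, he2⟩ := Bd.of_bigO hbu hrpos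
  obtain ⟨e3, he3B, he3⟩ := Bd.of_bigO hau hrpos
  have hB1u := Bd.b1 ρ ξ hu
  have hB1u' := Bd.b1' ρ ξ hu
  have hφB : Bd l φ := by
    refine Bd.congr' (f := fun x => 1 - β * u x ^ 2 - 2 * β * r x ^ 2 * B1hat ρ ξ (u x) +
      r x ^ 4 * e1 x) ?_ (he1.mono fun x h => by linarith)
    repeat' first
      | assumption | with_reducible apply Bd.const | with_reducible apply Bd.sub
      | with_reducible apply Bd.add | with_reducible apply Bd.mul
      | with_reducible apply Bd.pow | with_reducible apply Bd.neg
  have hbB : Bd l bu := by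
    refine Bd.congr' (f := fun x => u x + r x ^ 2 * B1hat' ρ ξ (u x) +
      r x ^ 4 * e2 x) ?_ (he2.mono fun x h => by linarith)
    repeat' first
      | assumption | with_reducible apply Bd.const | with_reducible apply Bd.sub
      | with_reducible apply Bd.add | with_reducible apply Bd.mul
      | with_reducible apply Bd.pow | with_reducible apply Bd.neg
  have haB : Bd l au := by
    refine Bd.congr' (f := fun x => r x ^ 2 * e3 x) ?_ he3
    repeat' first
      | assumption | with_reducible apply Bd.const | with_reducible apply Bd.sub
      | with_reducible apply Bd.add | with_reducible apply Bd.mul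
      | with_reducible apply Bd.pow | with_reducible apply Bd.neg
  -- step 1
  obtain ⟨y, hy⟩ : ∃ y : α → ℝ, y = fun x => φ x / r x := ⟨_, rfl⟩
  have hyφ : ∀ᶠ x in l, φ x = r x * y x := by
    filter_upwards [hrpos] with x h
    rw [hy]; field_simp
  have hypos : ∀ᶠ x in l, 0 < y x := by
    filter_upwards [hrpos, hpos] with x h1 h2
    rw [hy]; positivity
  have hyeq : ∀ᶠ x in l, k * y x ^ 2 = au x * φ x ^ 2 + E * bu x + m * bu x * φ x := by
    filter_upwards [hrpos, hyφ, heq] with x h1 h2 h3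
    have h4 : r x ^ 2 ≠ 0 := by positivity
    apply mul_left_cancel₀ h4
    rw [h3, h2]; ring
  have hyB : Bd l y := by
    have h1 : Bd l (fun x => k⁻¹ * (au x * φ x ^ 2 + E * bu x + m * bu x * φ x)) := by
      repeat' first
        | assumption | with_reducible apply Bd.const | with_reducible apply Bd.sub
        | with_reducible apply Bd.add | with_reducible apply Bd.mul
        | with_reducible apply Bd.pow | with_reducible apply Bd.neg
    obtain ⟨M, hM, h⟩ := h1.le
    refine Bd.of_le (M + 1) ?_
    filter_upwards [h, hyeq] with x h1 h2
    rw [← h2] at h1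
    have h3 : k⁻¹ * (k * y x ^ 2) = y x ^ 2 := by field_simp
    rw [h3] at h1
    have h4 := le_of_abs_le h1
    rw [abs_le]
    constructor <;> nlinarith
  -- step 2
  obtain ⟨H, hH⟩ : ∃ H : α → ℝ, H = fun x => y x + 2 * β * r x * B1hat ρ ξ (u x) - r x ^ 3 * e1 x :=
    ⟨_, rfl⟩
  have hHB : Bd l H := by
    rw [hH]
    repeat' first
      | assumption | with_reducible apply Bd.const | with_reducible apply Bd.sub
      | with_reducible apply Bd.add | with_reducible apply Bd.mul
      | with_reducible apply Bd.pow | with_reducible apply Bd.neg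
  have hHe : ∀ᶠ x in l, 1 - β * u x ^ 2 = r x * H x := by
    filter_upwards [he1, hyφ] with x h1 h2
    rw [h2] at h1
    rw [hH]; linear_combination (-1 : ℝ) * h1
  obtain ⟨J, hJ⟩ : ∃ J : α → ℝ, J = fun x => r x ^ 3 * e3 x * y x ^ 2 +
      E * (r x * B1hat' ρ ξ (u x) + r x ^ 3 * e2 x) + m * bu x * y x := ⟨_, rfl⟩
  have hJB : Bd l J := by
    rw [hJ]
    repeat' first
      | assumption | with_reducible apply Bd.const | with_reducible apply Bd.sub
      | with_reducible apply Bd.add | with_reducible apply Bd.mul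
      | with_reducible apply Bd.pow | with_reducible apply Bd.neg
  have hJe : ∀ᶠ x in l, k * y x ^ 2 = E * u x + r x * J x := by
    filter_upwards [hyeq, hyφ, he2, he3] with x h1 h2 h3 h4
    rw [h1, h2, h4, hJ]
    linear_combination E * h3
  have hlow : ∀ᶠ x in l, k * a0 / 2 < k * (u x + a0) := by
    have h1 : Tendsto (fun x => r x * (k / E * J x)) l (𝓝 0) :=
      Bd.mul_tendsto ((Bd.const _).mul hJB) hr0
    filter_upwards [h1.eventually_lt_const (half_pos hka), hJe] with x h2 h3
    have h4 : u x = (k * y x ^ 2 - r x * J x) / E := by rw [h3]; field_simp; ring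
    have h5 : k * u x = k ^ 2 * y x ^ 2 / E - r x * (k / E * J x) := by rw [h4]; field_simp
    have h6 : 0 ≤ k ^ 2 * y x ^ 2 / E := by positivity
    rw [mul_add, h5]; linarith
  obtain ⟨W, hW⟩ : ∃ W : α → ℝ, W = fun x => (k * (u x + a0))⁻¹ := ⟨_, rfl⟩
  have hWB : Bd l W := by
    refine Bd.of_le ((k * a0 / 2)⁻¹) ?_
    filter_upwards [hlow] with x h
    have h1 : 0 < k * a0 / 2 := by positivity
    rw [hW]
    simp only
    rw [abs_of_pos (inv_pos.mpr (h1.trans h))]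
    exact inv_anti₀ h1 h.le
  obtain ⟨z, hz⟩ : ∃ z : α → ℝ, z = fun x => -H x * k * W x / β := ⟨_, rfl⟩
  have hzB : Bd l z := by
    rw [hz]
    apply Bd.div_const
    repeat' first
      | assumption | with_reducible apply Bd.const | with_reducible apply Bd.sub
      | with_reducible apply Bd.add | with_reducible apply Bd.mul
      | with_reducible apply Bd.pow | with_reducible apply Bd.neg
  have hzu : ∀ᶠ x in l, u x = a0 + r x * z x := by
    filter_upwards [hlow, hHe] with x h1 h2
    have h3 : k * (u x + a0) ≠ 0 := by
      have : 0 < k * a0 / 2 := by positivity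
      exact (this.trans h1).ne'
    have h4 : u x + a0 ≠ 0 := right_ne_zero_of_mul h3
    have h5 : r x * z x = -(1 - β * u x ^ 2) / (β * (u x + a0)) := by
      rw [h2, hz, hW]; field_simp
    rw [h5, ← ha0]
    field_simp
    ring
  -- step 3
  obtain ⟨Z, hZ⟩ : ∃ Z : α → ℝ, Z = fun x => a1 + a2 * r x + a3 * r x ^ 2 := ⟨_, rfl⟩
  have hZB : Bd l Z := by
    rw [hZ]
    repeat' first
      | assumption | with_reducible apply Bd.const | with_reducible apply Bd.sub
      | with_reducible apply Bd.add | with_reducible apply Bd.mul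
      | with_reducible apply Bd.pow | with_reducible apply Bd.neg
  obtain ⟨Y, hY⟩ : ∃ Y : α → ℝ, Y = fun x => y0 + y1 * r x + y2 * r x ^ 2 := ⟨_, rfl⟩
  have hYB : Bd l Y := by
    rw [hY]
    repeat' first
      | assumption | with_reducible apply Bd.const | with_reducible apply Bd.sub
      | with_reducible apply Bd.add | with_reducible apply Bd.mul
      | with_reducible apply Bd.pow | with_reducible apply Bd.neg
  obtain ⟨U, hU⟩ : ∃ U : α → ℝ, U = fun x => a0 + r x * Z x := ⟨_, rfl⟩
  have hUB : Bd l U := by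
    rw [hU]
    repeat' first
      | assumption | with_reducible apply Bd.const | with_reducible apply Bd.sub
      | with_reducible apply Bd.add | with_reducible apply Bd.mul
      | with_reducible apply Bd.pow | with_reducible apply Bd.neg
  obtain ⟨b, hb⟩ : ∃ b : ℝ, b = ρ * ξ / 4 := ⟨_, rfl⟩
  have hB1 : ∀ q, B1hat ρ ξ q = b * q ^ 3 - q / 2 := by intro q; rw [B1hat, hb]; ring
  have hB1' : ∀ q, B1hat' ρ ξ q = 3 * b * q ^ 2 - 1 / 2 := by intro q; rw [B1hat', hb]; ring
  obtain ⟨K1, hK1⟩ : ∃ K1 : α → ℝ, K1 = fun x => -(β * (z x + Z x)) -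
    2 * β * r x * (b * (u x ^ 2 + u x * U x + U x ^ 2) - 1 / 2) := ⟨_, rfl⟩
  obtain ⟨K2, hK2⟩ : ∃ K2 : α → ℝ, K2 = fun x => e1 x -
    (β * ((a2 ^ 2 + 2 * a1 * a3) + 2 * a2 * a3 * r x + a3 ^ 2 * r x ^ 2) +
      2 * β * ((a2 + r x * a3) * (3 * b * a0 ^ 2 - 1 / 2) +
        Z x ^ 2 * (3 * b * a0 + b * r x * Z x))) := ⟨_, rfl⟩
  have hK1B : Bd l K1 := by
    rw [hK1]
    repeat' first
      | assumption | with_reducible apply Bd.const | with_reducible apply Bd.sub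
      | with_reducible apply Bd.add | with_reducible apply Bd.mul
      | with_reducible apply Bd.pow | with_reducible apply Bd.neg
  have hK2B : Bd l K2 := by
    rw [hK2]
    repeat' first
      | assumption | with_reducible apply Bd.const | with_reducible apply Bd.sub
      | with_reducible apply Bd.add | with_reducible apply Bd.mul
      | with_reducible apply Bd.pow | with_reducible apply Bd.neg
  have hd1 : ∀ᶠ x in l, (y x - Y x) + 2 * β * a0 * (z x - Z x) =
      r x * (z x - Z x) * K1 x + r x ^ 3 * K2 x := by
    filter_upwards [hrpos, he1, hyφ, hzu] with x h1 h2 h3 h4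
    have h5 : y x = -2 * β * a0 * z x - β * r x * z x ^ 2 - 2 * β * r x * B1hat ρ ξ (u x) +
        r x ^ 3 * e1 x := by
      apply mul_left_cancel₀ h1.ne'
      rw [← h3]
      have : φ x = 1 - β * u x ^ 2 - 2 * β * r x ^ 2 * B1hat ρ ξ (u x) + r x ^ 4 * e1 x := by
        linarith
      rw [this]
      generalize B1hat ρ ξ (u x) = bb
      rw [h4]
      linear_combination (-1 : ℝ) * ha0
    have hYx : Y x = -2 * β * a0 * Z x - β * r x * Z x ^ 2 - 2 * β * r x * B1hat ρ ξ (U x) +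
        r x ^ 3 * (e1 x - K2 x) := by
      rw [hB1, hK2, hU, hY, hy0e, hy1, hy2, hB1, hB1', hZ]
      ring
    have h11 : U x = a0 + r x * Z x := by rw [hU]
    have hK1x : K1 x = -(β * (z x + Z x)) -
      2 * β * r x * (b * (u x ^ 2 + u x * U x + U x ^ 2) - 1 / 2) := by rw [hK1]
    simp only [hB1] at h5 hYx
    rw [h5, hYx, hK1x, h11, h4]
    ring
  obtain ⟨K3, hK3⟩ : ∃ K3 : α → ℝ, K3 = fun x => (E + m * r x * y x) * (r x * e2 x) +
    r x * e3 x * y x ^ 2 := ⟨_, rfl⟩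
  obtain ⟨V2, hV2⟩ : ∃ V2 : ℝ, V2 = a2 + B1hat' ρ ξ a0 := ⟨_, rfl⟩
  obtain ⟨K4, hK4⟩ : ∃ K4 : α → ℝ, K4 = fun x => 2 * k * y1 * y2 + k * y2 ^ 2 * r x -
    (m * y0 * V2 + m * y1 * (a1 + V2 * r x) + m * y2 * (a0 + a1 * r x + V2 * r x ^ 2)) -
    (E + m * r x * Y x) * (a3 + 3 * b * Z x * (2 * a0 + r x * Z x)) := ⟨_, rfl⟩
  obtain ⟨K5, hK5⟩ : ∃ K5 : α → ℝ, K5 = fun x => m * (u x + r x ^ 2 * B1hat' ρ ξ (u x)) := ⟨_, rfl⟩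
  obtain ⟨K6, hK6⟩ : ∃ K6 : α → ℝ, K6 = fun x => (E + m * r x * Y x) *
    (1 + r x ^ 2 * (3 * b * (u x + U x))) := ⟨_, rfl⟩
  have hK3B : Bd l K3 := by
    rw [hK3]
    repeat' first
      | assumption | with_reducible apply Bd.const | with_reducible apply Bd.sub
      | with_reducible apply Bd.add | with_reducible apply Bd.mul
      | with_reducible apply Bd.pow | with_reducible apply Bd.neg
  have hK4B : Bd l K4 := by
    rw [hK4]
    repeat' first
      | assumption | with_reducible apply Bd.const | with_reducible apply Bd.sub
      | with_reducible apply Bd.add | with_reducible apply Bd.mul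
      | with_reducible apply Bd.pow | with_reducible apply Bd.neg
  have hK5B : Bd l K5 := by
    rw [hK5]
    repeat' first
      | assumption | with_reducible apply Bd.const | with_reducible apply Bd.sub
      | with_reducible apply Bd.add | with_reducible apply Bd.mul
      | with_reducible apply Bd.pow | with_reducible apply Bd.neg
  have hK6B : Bd l K6 := by
    rw [hK6]
    repeat' first
      | assumption | with_reducible apply Bd.const | with_reducible apply Bd.sub
      | with_reducible apply Bd.add | with_reducible apply Bd.mul
      | with_reducible apply Bd.pow | with_reducible apply Bd.neg
  have hd2 : ∀ᶠ x in l, k * (y x + Y x) * (y x - Y x) =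
      r x * (y x - Y x) * K5 x + r x * (z x - Z x) * K6 x + r x ^ 3 * (K3 x - K4 x) := by
    filter_upwards [hyeq, hyφ, he2, he3, hzu] with x h1 h2 h3 h4 h5
    have hbx : bu x = u x + r x ^ 2 * B1hat' ρ ξ (u x) + r x ^ 4 * e2 x := by linarith
    have h6 : k * y x ^ 2 = (E + m * r x * y x) * (u x + r x ^ 2 * B1hat' ρ ξ (u x)) +
        r x ^ 3 * K3 x := by
      rw [h1, h2, h4, hbx, hK3]
      ring
    have h7 : k * Y x ^ 2 = (E + m * r x * Y x) * (U x + r x ^ 2 * B1hat' ρ ξ (U x)) +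
        r x ^ 3 * K4 x := by
      rw [← hV2] at c2
      have h8 : U x + r x ^ 2 * B1hat' ρ ξ (U x) = a0 + a1 * r x + V2 * r x ^ 2 +
          r x ^ 3 * (a3 + 3 * b * Z x * (2 * a0 + r x * Z x)) := by
        rw [hV2, hB1', hB1', hU, hZ]; ring
      rw [h8, hK4]
      have h9 : Y x = y0 + y1 * r x + y2 * r x ^ 2 := by rw [hY]
      simp only [h9]
      linear_combination c0 + r x * c1 + r x ^ 2 * c2
    have h10 : k * (y x + Y x) * (y x - Y x) = k * y x ^ 2 - k * Y x ^ 2 := by ring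
    have h11 : U x = a0 + r x * Z x := by rw [hU]
    rw [h10, h6, h7, hK5, hK6]
    simp only [hB1']
    rw [h11, h5]
    ring
  -- conclusion
  obtain ⟨S, hS⟩ : ∃ S : α → ℝ, S = fun x => (k * (y x + Y x))⁻¹ := ⟨_, rfl⟩
  have hYlow : ∀ᶠ x in l, y0 / 2 < Y x := by
    have h1 : Tendsto Y l (𝓝 (y0 + y1 * 0 + y2 * 0 ^ 2)) := by
      rw [hY]
      exact ((tendsto_const_nhds.add (hr0.const_mul y1))).add ((hr0.pow 2).const_mul y2)
    exact h1.eventually_const_lt (by simp; linarith)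
  have hSB : Bd l S := by
    refine Bd.of_le ((|k| * (y0 / 2))⁻¹) ?_
    filter_upwards [hYlow, hypos] with x h1 h2
    rw [hS]
    simp only
    have hk' : 0 < |k| := abs_pos.mpr hk
    rw [abs_inv, abs_mul, abs_of_pos (by linarith : 0 < y x + Y x)]
    apply inv_anti₀ (by positivity)
    gcongr
    linarith
  have hd3 : ∀ᶠ x in l, y x - Y x = r x * (y x - Y x) * (K5 x * S x) +
      r x * (z x - Z x) * (K6 x * S x) + r x ^ 3 * ((K3 x - K4 x) * S x) := by
    filter_upwards [hYlow, hypos, hd2] with x h1 h2 h3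
    have h4 : k * (y x + Y x) ≠ 0 := mul_ne_zero hk (by linarith)
    have h5 : y x - Y x = (k * (y x + Y x) * (y x - Y x)) * S x := by
      have h6 : y x + Y x ≠ 0 := right_ne_zero_of_mul h4
      rw [hS]; field_simp
    rw [h3] at h5
    linear_combination h5
  have ha00 : a0 ≠ 0 := right_ne_zero_of_mul hka.ne'
  have hd4 : ∀ᶠ x in l, z x - Z x = r x * (y x - Y x) * (-(K5 x * S x) / (2 * β * a0)) +
      r x * (z x - Z x) * ((K1 x - K6 x * S x) / (2 * β * a0)) +
      r x ^ 3 * ((K2 x - (K3 x - K4 x) * S x) / (2 * β * a0)) := by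
    filter_upwards [hd3, hd1] with x h1 h2
    have h3 : 2 * β * a0 ≠ 0 := by positivity
    field_simp
    linear_combination h2 - h1
  set g : α → ℝ := fun x => r x * (|y x - Y x| + |z x - Z x|) + r x ^ 3 with hg
  have hO : ∀ (A B C : α → ℝ), Bd l A → Bd l B → Bd l C →
      (fun x => r x * (y x - Y x) * A x + r x * (z x - Z x) * B x + r x ^ 3 * C x) =O[l] g := by
    intro A B C hA hB hC
    have t : ∀ (f : α → ℝ) (A : α → ℝ), Bd l A → (∀ᶠ x in l, |f x| ≤ g x) →
        (fun x => f x * A x) =O[l] g := by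
      intro f A hA hf
      have h1 : f =O[l] g := IsBigO.of_bound 1 (hf.mono fun x h => by
        rw [one_mul, Real.norm_eq_abs, Real.norm_eq_abs]; exact h.trans (le_abs_self _))
      have h2 := h1.mul hA
      simpa using h2
    refine ((t _ A hA ?_).add (t _ B hB ?_)).add (t _ C hC ?_)
    · filter_upwards [hrpos] with x h
      rw [abs_mul, abs_of_pos h, hg]
      have := mul_nonneg h.le (abs_nonneg (z x - Z x))
      have h3 : 0 < r x ^ 3 := by positivity
      simp only [mul_add]
      linarith
    · filter_upwards [hrpos] with x h
      rw [abs_mul, abs_of_pos h, hg]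
      have := mul_nonneg h.le (abs_nonneg (y x - Y x))
      have h3 : 0 < r x ^ 3 := by positivity
      simp only [mul_add]
      linarith
    · filter_upwards [hrpos] with x h
      have h3 : 0 < r x ^ 3 := by positivity
      rw [abs_of_pos h3, hg]
      have : 0 ≤ r x * (|y x - Y x| + |z x - Z x|) := by positivity
      linarith
  have hOy : (fun x => y x - Y x) =O[l] g :=
    (hO _ _ _ (hK5B.mul hSB) (hK6B.mul hSB) ((hK3B.sub hK4B).mul hSB)).congr'
      (hd3.mono fun x h => h.symm) EventuallyEq.rfl
  have hOz : (fun x => z x - Z x) =O[l] g :=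
    (hO _ _ _ ((hK5B.mul hSB).neg.div_const _) ((hK1B.sub (hK6B.mul hSB)).div_const _)
      ((hK2B.sub ((hK3B.sub hK4B).mul hSB)).div_const _)).congr'
      (hd4.mono fun x h => h.symm) EventuallyEq.rfl
  have hsum := hOy.norm_left.add hOz.norm_left
  obtain ⟨c, hc, hcb⟩ := hsum.exists_pos
  have hrc : Tendsto (fun x => r x * c) l (𝓝 0) := by simpa using hr0.mul_const c
  refine IsBigO.of_bound (2 * c) ?_
  filter_upwards [hcb.bound, hrpos, hrc.eventually_lt_const (half_pos one_pos), hzu]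
    with x h1 h2 h3 h4
  have h3' : 0 < r x ^ 3 := by positivity
  have hgx : 0 ≤ g x := by rw [hg]; positivity
  simp only [Real.norm_eq_abs] at h1
  rw [abs_of_nonneg (by positivity), abs_of_nonneg hgx, hg] at h1
  simp only at h1
  have hsum0 : 0 ≤ |y x - Y x| + |z x - Z x| := by positivity
  have h5 : |y x - Y x| + |z x - Z x| ≤ 2 * c * r x ^ 3 := by nlinarith
  have h6 : |z x - Z x| ≤ 2 * c * r x ^ 3 := by linarith [abs_nonneg (y x - Y x)]
  have h7 : u x - (a0 + a1 * r x + a2 * r x ^ 2 + a3 * r x ^ 3) = r x * (z x - Z x) := by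
    rw [h4, hZ]; ring
  rw [h7, Real.norm_eq_abs, Real.norm_eq_abs, abs_mul, abs_of_pos h2,
    abs_of_pos (by positivity : 0 < r x ^ 4)]
  calc r x * |z x - Z x| ≤ r x * (2 * c * r x ^ 3) := by gcongr
    _ = 2 * c * r x ^ 4 := by ring


lemma betaT_pos (κ ξ t : ℝ) (hκ : 0 < κ) (hξ : 0 < ξ) (ht : 0 < t) : 0 < betaT κ ξ t := by
  unfold betaT
  have h1 : Real.exp (-(κ * t)) < 1 := by
    rw [Real.exp_lt_one_iff]
    have := mul_pos hκ ht
    linarith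
  have h2 : 0 < 1 - Real.exp (-(κ * t)) := by linarith
  positivity

/-- the algebraic identities behind the expansion, in rational parameters. -/
lemma coef_alg (κ θ ξ sg K w e b P Q k β a0 a1 a2 a3 : ℝ) (hξ : 0 < ξ) (hsg : sg = 1 ∨ sg = -1)
    (hK : 0 < K) (hw : 0 < w) (he : 0 < e) (hb : 0 < b)
    (hkk : k = sg * K ^ 2) (hββ : β = b ^ 4)
    (h0 : a0 = sg / b ^ 2) (h1 : a1 = -a0 * w * e / (2 * K * b))
    (h2 : a2 = -(κ * θ) / (k * ξ ^ 2) - P / a0)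
    (h3 : a3 = (2 * β * a1 ^ 3 / (ξ ^ 4 * (w ^ 2) ^ 2)) *
      (ξ ^ 2 * w ^ 2 * β * (e ^ 2)⁻¹ * (K ^ 2 * ξ ^ 2 * b ^ 2 * P - k * ξ ^ 2 * Q - κ * θ) +
        (2 * κ * θ * β * (e ^ 2)⁻¹) ^ 2 - ξ ^ 4 * (w ^ 2) ^ 2 / 16)) :
    β * a0 ^ 2 = 1 ∧ 0 < k * a0 ∧ 0 < -2 * β * a0 * a1 ∧
    k * (-2 * β * a0 * a1) ^ 2 = w ^ 2 * e ^ 2 * a0 ∧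
    2 * k * (-2 * β * a0 * a1) * (-2 * β * a0 * a2 - β * a1 ^ 2 - 2 * β * P) =
      w ^ 2 * e ^ 2 * a1 + 4 * κ * θ * β / ξ ^ 2 * (-2 * β * a0 * a1) * a0 ∧
    k * ((-2 * β * a0 * a2 - β * a1 ^ 2 - 2 * β * P) ^ 2 + 2 * (-2 * β * a0 * a1) *
      (-2 * β * a0 * a3 - 2 * β * a1 * a2 - 2 * β * a1 * Q)) =
      w ^ 2 * e ^ 2 * (a2 + Q) + 4 * κ * θ * β / ξ ^ 2 * ((-2 * β * a0 * a1) * a1 +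
        (-2 * β * a0 * a2 - β * a1 ^ 2 - 2 * β * P) * a0) := by
  have hy : -2 * β * a0 * a1 = w * e / (K * b) := by
    rw [h1, h0, hββ]
    rcases hsg with rfl | rfl <;> field_simp
  refine ⟨?_, ?_, ?_, ?_, ?_, ?_⟩
  · rw [h0, hββ]
    rcases hsg with rfl | rfl <;> field_simp <;> ring
  · rw [h0, hkk]
    rcases hsg with rfl | rfl
    · positivity
    · have : -1 * K ^ 2 * (-1 / b ^ 2) = K ^ 2 / b ^ 2 := by ring
      rw [this]; positivity
  · rw [hy]; positivity
  · rw [hy, h0, hkk]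
    rcases hsg with rfl | rfl <;> field_simp
  · rw [hy, h2, h1, h0, hkk, hββ]
    rcases hsg with rfl | rfl <;> field_simp <;> ring
  · rw [hy, h3, h2, h1, h0, hkk, hββ]
    rcases hsg with rfl | rfl <;> field_simp <;> ring

theorem stmt13 (κ θ ξ v ρ t : ℝ) (hκ : 0 < κ) (hθ : 0 < θ) (hξ : 0 < ξ)
    (hv : 0 < v) (hρ : ρ ∈ Set.Ioo (-1 : ℝ) 1) (ht : 0 < t)
    (k : ℝ) (hk : k ≠ 0) (ustar : ℝ → ℝ)
    (hustar : ∀ᶠ τ in 𝓝[>] (0 : ℝ), ustar τ ∈ hestDom κ θ ξ v ρ t τ ∧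
      deriv (hestLambda κ θ ξ v ρ t τ) (ustar τ) = (k : ℂ)) :
    (fun τ : ℝ => ustar τ -
        (coefA0 κ θ ξ v ρ t k + coefA1 κ θ ξ v ρ t k * τ ^ ((1 : ℝ) / 4) +
          coefA2 κ θ ξ v ρ t k * τ ^ ((1 : ℝ) / 2) + coefA3 κ θ ξ v ρ t k * τ ^ ((3 : ℝ) / 4)))
      =O[𝓝[>] (0 : ℝ)] fun τ : ℝ => τ := by
  have hβ := betaT_pos κ ξ t hκ hξ ht
  have hE : 0 < v * Real.exp (-(κ * t)) := by positivity
  obtain ⟨sg, hsg, hsgk, hkk⟩ : ∃ sg : ℝ, (sg = 1 ∨ sg = -1) ∧ sgn' k = sg ∧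
      k = sg * Real.sqrt |k| ^ 2 := by
    rw [Real.sq_sqrt (abs_nonneg k)]
    rcases lt_or_ge k 0 with h | h
    · exact ⟨-1, Or.inr rfl, by rw [sgn', if_neg (not_le.mpr h)], by rw [abs_of_neg h]; ring⟩
    · exact ⟨1, Or.inl rfl, by rw [sgn', if_pos h], by rw [abs_of_nonneg h]; ring⟩
  have hK : 0 < Real.sqrt |k| := Real.sqrt_pos.mpr (abs_pos.mpr hk)
  have hK2 : |k| = Real.sqrt |k| ^ 2 := (Real.sq_sqrt (abs_nonneg k)).symm
  have hw : 0 < Real.sqrt v := Real.sqrt_pos.mpr hv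
  have hw2 : v = Real.sqrt v ^ 2 := (Real.sq_sqrt hv.le).symm
  have he := Real.exp_pos (-(κ * t) / 2)
  have he2 : Real.exp (-(κ * t)) = Real.exp (-(κ * t) / 2) ^ 2 := by
    rw [← Real.exp_nat_mul]; congr 1; push_cast; ring
  have he3 : Real.exp (κ * t) = (Real.exp (-(κ * t) / 2) ^ 2)⁻¹ := by
    rw [← he2, ← Real.exp_neg, neg_neg]
  have hb : 0 < betaT κ ξ t ^ ((1 : ℝ) / 4) := by positivity
  have hb4 : betaT κ ξ t = (betaT κ ξ t ^ ((1 : ℝ) / 4)) ^ 4 := by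
    rw [← Real.rpow_natCast, ← Real.rpow_mul hβ.le]; norm_num
  have hb2 : Real.sqrt (betaT κ ξ t) = (betaT κ ξ t ^ ((1 : ℝ) / 4)) ^ 2 := by
    rw [Real.sqrt_eq_rpow, ← Real.rpow_natCast, ← Real.rpow_mul hβ.le]; norm_num
  have h0 : coefA0 κ θ ξ v ρ t k = sg / (betaT κ ξ t ^ ((1 : ℝ) / 4)) ^ 2 := by
    rw [coefA0, hsgk, hb2]
  have h3 : coefA3 κ θ ξ v ρ t k = (2 * betaT κ ξ t * coefA1 κ θ ξ v ρ t k ^ 3 /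
      (ξ ^ 4 * (Real.sqrt v ^ 2) ^ 2)) *
      (ξ ^ 2 * Real.sqrt v ^ 2 * betaT κ ξ t * (Real.exp (-(κ * t) / 2) ^ 2)⁻¹ *
        (Real.sqrt |k| ^ 2 * ξ ^ 2 * (betaT κ ξ t ^ ((1 : ℝ) / 4)) ^ 2 *
          B1hat ρ ξ (coefA0 κ θ ξ v ρ t k) -
          k * ξ ^ 2 * B1hat' ρ ξ (coefA0 κ θ ξ v ρ t k) - κ * θ) +
        (2 * κ * θ * betaT κ ξ t * (Real.exp (-(κ * t) / 2) ^ 2)⁻¹) ^ 2 -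
          ξ ^ 4 * (Real.sqrt v ^ 2) ^ 2 / 16) := by
    rw [coefA3, he3, ← hb2, ← hw2, ← hK2]
  obtain ⟨g1, g2, g3, g4, g5, g6⟩ := coef_alg κ θ ξ sg (Real.sqrt |k|) (Real.sqrt v)
    (Real.exp (-(κ * t) / 2)) (betaT κ ξ t ^ ((1 : ℝ) / 4))
    (B1hat ρ ξ (coefA0 κ θ ξ v ρ t k)) (B1hat' ρ ξ (coefA0 κ θ ξ v ρ t k)) k (betaT κ ξ t)
    (coefA0 κ θ ξ v ρ t k) (coefA1 κ θ ξ v ρ t k) (coefA2 κ θ ξ v ρ t k) (coefA3 κ θ ξ v ρ t k)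
    hξ hsg hK hw he hb hkk hb4 h0 rfl rfl h3
  rw [← hw2, ← he2] at g4 g5 g6
  -- the time variables
  have hpos : ∀ᶠ τ in 𝓝[>] (0 : ℝ), 0 < τ := self_mem_nhdsWithin
  have hsqrt : Tendsto Real.sqrt (𝓝[>] 0) (𝓝[>] 0) := by
    refine tendsto_nhdsWithin_iff.mpr ⟨?_, hpos.mono fun τ h => Real.sqrt_pos.mpr h⟩
    have := (Real.continuous_sqrt.tendsto 0).mono_left
      (nhdsWithin_le_nhds : 𝓝[>] (0 : ℝ) ≤ 𝓝 0)
    simpa using this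
  have hr : Tendsto (fun τ : ℝ => τ ^ ((1 : ℝ) / 4)) (𝓝[>] 0) (𝓝[>] 0) := by
    refine tendsto_nhdsWithin_iff.mpr ⟨?_, hpos.mono fun τ h => Real.rpow_pos_of_pos h _⟩
    have := ((Real.continuous_rpow_const (by norm_num : (0 : ℝ) ≤ 1 / 4)).tendsto 0).mono_left
      (nhdsWithin_le_nhds : 𝓝[>] (0 : ℝ) ≤ 𝓝 0)
    rwa [Real.zero_rpow (by norm_num)] at this
  have r2 : ∀ τ : ℝ, 0 < τ → (τ ^ ((1 : ℝ) / 4)) ^ 2 = Real.sqrt τ := by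
    intro τ h
    rw [Real.sqrt_eq_rpow, ← Real.rpow_natCast, ← Real.rpow_mul h.le]; norm_num
  have r3 : ∀ τ : ℝ, 0 < τ → (τ ^ ((1 : ℝ) / 4)) ^ 3 = τ ^ ((3 : ℝ) / 4) := by
    intro τ h
    rw [← Real.rpow_natCast, ← Real.rpow_mul h.le]; norm_num
  have r4 : ∀ τ : ℝ, 0 < τ → (τ ^ ((1 : ℝ) / 4)) ^ 4 = τ := by
    intro τ h
    rw [← Real.rpow_natCast, ← Real.rpow_mul h.le]; norm_num
  obtain ⟨C, R, hs⟩ := saddle κ θ ξ v ρ t hκ hθ hξ hβ k hk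
  have hs1 : ∀ᶠ τ in 𝓝[>] (0 : ℝ), |ustar τ| ≤ R ∧ ∃ φ bu au : ℝ, 0 < φ ∧
      |φ - (1 - betaT κ ξ t * ustar τ ^ 2 -
        2 * betaT κ ξ t * Real.sqrt τ * B1hat ρ ξ (ustar τ))| ≤ C * τ ∧
      |bu - ustar τ - Real.sqrt τ * B1hat' ρ ξ (ustar τ)| ≤ C * τ ∧
      |au| ≤ C * Real.sqrt τ ∧
      Real.sqrt τ * (au * φ ^ 2 + v * Real.exp (-(κ * t)) * bu +
        4 * κ * θ * betaT κ ξ t / ξ ^ 2 * bu * φ) = k * φ ^ 2 := by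
    filter_upwards [hsqrt.eventually hs, hustar, hpos] with τ h1 h2 h3
    have h4 : Real.sqrt τ ^ 2 = τ := Real.sq_sqrt h3.le
    rw [h4] at h1
    exact h1 _ h2.1 h2.2
  have hsk : ∀ τ : ℝ, ∃ p : ℝ × ℝ × ℝ, (∃ φ bu au : ℝ, 0 < φ ∧
      |φ - (1 - betaT κ ξ t * ustar τ ^ 2 -
        2 * betaT κ ξ t * Real.sqrt τ * B1hat ρ ξ (ustar τ))| ≤ C * τ ∧
      |bu - ustar τ - Real.sqrt τ * B1hat' ρ ξ (ustar τ)| ≤ C * τ ∧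
      |au| ≤ C * Real.sqrt τ ∧
      Real.sqrt τ * (au * φ ^ 2 + v * Real.exp (-(κ * t)) * bu +
        4 * κ * θ * betaT κ ξ t / ξ ^ 2 * bu * φ) = k * φ ^ 2) → 0 < p.1 ∧
      |p.1 - (1 - betaT κ ξ t * ustar τ ^ 2 -
        2 * betaT κ ξ t * Real.sqrt τ * B1hat ρ ξ (ustar τ))| ≤ C * τ ∧
      |p.2.1 - ustar τ - Real.sqrt τ * B1hat' ρ ξ (ustar τ)| ≤ C * τ ∧
      |p.2.2| ≤ C * Real.sqrt τ ∧
      Real.sqrt τ * (p.2.2 * p.1 ^ 2 + v * Real.exp (-(κ * t)) * p.2.1 +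
        4 * κ * θ * betaT κ ξ t / ξ ^ 2 * p.2.1 * p.1) = k * p.1 ^ 2 := by
    intro τ
    by_cases h : ∃ φ bu au : ℝ, 0 < φ ∧
      |φ - (1 - betaT κ ξ t * ustar τ ^ 2 -
        2 * betaT κ ξ t * Real.sqrt τ * B1hat ρ ξ (ustar τ))| ≤ C * τ ∧
      |bu - ustar τ - Real.sqrt τ * B1hat' ρ ξ (ustar τ)| ≤ C * τ ∧
      |au| ≤ C * Real.sqrt τ ∧
      Real.sqrt τ * (au * φ ^ 2 + v * Real.exp (-(κ * t)) * bu +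
        4 * κ * θ * betaT κ ξ t / ξ ^ 2 * bu * φ) = k * φ ^ 2
    · obtain ⟨φ, bu, au, h'⟩ := h
      exact ⟨(φ, bu, au), fun _ => h'⟩
    · exact ⟨0, fun h' => absurd h' h⟩
  choose p hp using hsk
  have hfin := asym (𝓝[>] (0 : ℝ)) (betaT κ ξ t) (v * Real.exp (-(κ * t)))
    (4 * κ * θ * betaT κ ξ t / ξ ^ 2) k (coefA0 κ θ ξ v ρ t k) (coefA1 κ θ ξ v ρ t k)
    (coefA2 κ θ ξ v ρ t k) (coefA3 κ θ ξ v ρ t k) ρ ξ _ _ hβ hE hk g1 g2 _ g3 rfl rfl rfl g4 g5 g6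
    (fun τ : ℝ => τ ^ ((1 : ℝ) / 4)) ustar (fun τ => (p τ).1) (fun τ => (p τ).2.1)
    (fun τ => (p τ).2.2) hr (Bd.of_le R (hs1.mono fun _ h => h.1)) ?_ ?_ ?_ ?_ ?_
  · refine hfin.congr' ?_ ?_
    · filter_upwards [hpos] with τ h
      rw [r2 τ h, r3 τ h, Real.sqrt_eq_rpow]
    · filter_upwards [hpos] with τ h
      exact r4 τ h
  · refine IsBigO.of_bound C ?_
    filter_upwards [hs1, hpos] with τ h1 h2
    rw [r4 τ h2, r2 τ h2, Real.norm_eq_abs, Real.norm_eq_abs, abs_of_pos h2]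
    exact (hp τ h1.2).2.1
  · refine IsBigO.of_bound C ?_
    filter_upwards [hs1, hpos] with τ h1 h2
    rw [r4 τ h2, r2 τ h2, Real.norm_eq_abs, Real.norm_eq_abs, abs_of_pos h2]
    exact (hp τ h1.2).2.2.1
  · refine IsBigO.of_bound C ?_
    filter_upwards [hs1, hpos] with τ h1 h2
    rw [r2 τ h2, Real.norm_eq_abs, Real.norm_eq_abs, abs_of_nonneg (Real.sqrt_nonneg τ)]
    exact (hp τ h1.2).2.2.2.1
  · exact hs1.mono fun τ h1 => (hp τ h1.2).1
  · filter_upwards [hs1, hpos] with τ h1 h2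
    rw [r2 τ h2]
    exact (hp τ h1.2).2.2.2.2

end
end
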